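/- arXiv:1301.4282 — 2 statements merged into one kernel-verified Lean document; each statement's English description precedes it below -/
import Mathlib

section
/- Let s > 1/2 and let Ω ⊂ ℝ² be a bounded open set, D = Ω × (-π, π). There exists a constant C = C(s) > 0 such that for all smooth divergence-free vector fields u, v, w : D → ℝ³ that are 2π-periodic with mean zero in x₃ and vanish on the lateral boundary ∂Ω × (-π, π), one has |∫_D (u·∇)v · w dx| ≤ C ‖u‖_{L²(D)}^{1/2} ‖∇u‖_{L²(D)}^{1/2} ‖∇v‖_{L²(D)}^{1 - 1/(2s)} ‖∂₃^s ∇v‖_{L²(D)}^{1/(2s)} ‖w‖_{L²(D)}^{1/2} ‖∇w‖_{L²(D)}^{1/2}, where (u·∇)v denotes the vector field with components Σ_j u_j ∂_j v_i. -/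
open MeasureTheory Set
open scoped Real

/-- The three coordinate directions of the cylinder `(ℝ × ℝ) × ℝ`
(two horizontal, one vertical). -/
def dir3 : Fin 3 → (ℝ × ℝ) × ℝ := ![((1, 0), 0), ((0, 1), 0), ((0, 0), 1)]

lemma aux_summable_nat (s : ℝ) (hs : 1 / 2 < s) :
    Summable (fun m : ℕ => 1 / (1 + (m : ℝ) ^ (2 * s))) := by
  rw [← summable_nat_add_iff 1]
  have h := (summable_nat_add_iff 1).2 (Real.summable_one_div_nat_rpow.2 (by linarith : 1 < 2 * s))
  refine Summable.of_nonneg_of_le (fun m => by positivity) (fun m => ?_) h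
  apply one_div_le_one_div_of_le
  · positivity
  · linarith

lemma aux_nat_ennreal (s : ℝ) (hs : 1 / 2 < s) (N : ℕ) (hN : 0 < N) (M : ℝ) (hM : 0 < M)
    (hMN : M ≤ N) :
    ∑' n : ℕ, ENNReal.ofReal (1 / (1 + ((n : ℝ) / M) ^ (2 * s))) ≤
      N * ENNReal.ofReal (∑' m : ℕ, 1 / (1 + (m : ℝ) ^ (2 * s))) := by
  have : NeZero N := ⟨hN.ne'⟩
  rw [← (Nat.divModEquiv N).symm.tsum_eq,
    ENNReal.ofReal_tsum_of_nonneg (fun m => by positivity) (aux_summable_nat s hs),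
    ← ENNReal.tsum_mul_left]
  rw [ENNReal.tsum_prod']
  refine ENNReal.tsum_le_tsum (fun m => ?_)
  rw [tsum_fintype]
  calc _ ≤ ∑ r : Fin N, ENNReal.ofReal (1 / (1 + (m : ℝ) ^ (2 * s))) := by
        refine Finset.sum_le_sum (fun r _ => ?_)
        apply ENNReal.ofReal_le_ofReal
        apply one_div_le_one_div_of_le (by positivity)
        gcongr
        rw [le_div_iff₀ hM]
        simp only [Nat.divModEquiv_symm_apply]
        push_cast
        have : (m : ℝ) * M ≤ m * N := by gcongr
        have h2 : (0:ℝ) ≤ ((r : ℕ) : ℝ) := by positivity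
        nlinarith
    _ = _ := by simp

lemma aux_int (s : ℝ) (hs : 1 / 2 < s) :
    ∃ K : ℝ, 0 < K ∧ ∀ M : ℝ, 1 ≤ M →
      Summable (fun k : ℤ => 1 / (1 + (|(k : ℝ)| / M) ^ (2 * s))) ∧
      ∑' k : ℤ, 1 / (1 + (|(k : ℝ)| / M) ^ (2 * s)) ≤ K * M := by
  set S := ∑' m : ℕ, 1 / (1 + (m : ℝ) ^ (2 * s)) with hS
  have hS0 : 0 ≤ S := tsum_nonneg (fun m => by positivity)
  refine ⟨4 * (S + 1), by positivity, fun M hM => ?_⟩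
  have hM0 : 0 < M := by linarith
  set f : ℤ → ℝ := fun k => 1 / (1 + (|(k : ℝ)| / M) ^ (2 * s)) with hf
  have hf0 : ∀ k, 0 ≤ f k := fun k => by simp only [hf]; positivity
  have hnat := aux_nat_ennreal s hs ⌈M⌉₊ (Nat.ceil_pos.2 hM0) M hM0 (Nat.le_ceil M)
  have key : ∑' k : ℤ, ENNReal.ofReal (f k) ≤ ENNReal.ofReal (4 * (S + 1) * M) := by
    rw [tsum_of_nat_of_neg_add_one ENNReal.summable ENNReal.summable]
    have h1 : ∑' n : ℕ, ENNReal.ofReal (f (n : ℤ)) ≤ ENNReal.ofReal (2 * (S + 1) * M) := by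
      calc _ ≤ (⌈M⌉₊ : ENNReal) * ENNReal.ofReal S := by
            refine le_trans (le_of_eq ?_) hnat
            refine tsum_congr (fun n => ?_)
            simp [hf]
        _ = ENNReal.ofReal ((⌈M⌉₊ : ℝ) * S) := by
            rw [ENNReal.ofReal_mul (by positivity), ENNReal.ofReal_natCast]
        _ ≤ _ := by
            apply ENNReal.ofReal_le_ofReal
            have : (⌈M⌉₊ : ℝ) ≤ 2 * M := by
              have := Nat.ceil_lt_add_one hM0.le
              linarith
            nlinarith
    have h2 : ∑' n : ℕ, ENNReal.ofReal (f (-((n : ℤ) + 1))) ≤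
        ∑' n : ℕ, ENNReal.ofReal (f (n : ℤ)) := by
      refine le_trans (le_of_eq ?_) (ENNReal.tsum_comp_le_tsum_of_injective
        (f := fun n : ℕ => n + 1) (add_left_injective 1) (fun n : ℕ => ENNReal.ofReal (f (n : ℤ))))
      refine tsum_congr (fun n => ?_)
      simp only [hf]
      push_cast
      rw [abs_neg]
    calc _ ≤ ENNReal.ofReal (2 * (S + 1) * M) + ENNReal.ofReal (2 * (S + 1) * M) :=
          add_le_add h1 (h2.trans h1)
      _ = _ := by
          rw [← ENNReal.ofReal_add (by positivity) (by positivity)]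
          congr 1; ring
  have hfin : ∀ t : Finset ℤ, ∑ k ∈ t, f k ≤ 4 * (S + 1) * M := fun t => by
    rw [← ENNReal.ofReal_le_ofReal_iff (by positivity),
      ENNReal.ofReal_sum_of_nonneg (fun k _ => hf0 k)]
    exact (ENNReal.sum_le_tsum t).trans key
  exact ⟨summable_of_sum_le hf0 hfin, Real.tsum_le_of_sum_le hf0 hfin⟩

lemma aux_seq (s : ℝ) (hs : 1 / 2 < s) :
    ∃ K : ℝ, 0 < K ∧ ∀ c : ℤ → ℝ, (∀ k, 0 ≤ c k) → c 0 = 0 →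
      Summable (fun k => c k ^ 2) → Summable (fun k : ℤ => (|(k : ℝ)| ^ s * c k) ^ 2) →
      Summable c ∧ ∑' k, c k ≤ K * (∑' k, c k ^ 2) ^ ((1 / 2 : ℝ) * (1 - 1 / (2 * s))) *
        (∑' k : ℤ, (|(k : ℝ)| ^ s * c k) ^ 2) ^ (1 / (4 * s)) := by
  obtain ⟨K, hK, h⟩ := aux_int s hs
  refine ⟨(2 * K) ^ (1 / 2 : ℝ), by positivity, fun c hc hc0 hX hY => ?_⟩
  set X := ∑' k, c k ^ 2 with hXd
  set Y := ∑' k : ℤ, (|(k : ℝ)| ^ s * c k) ^ 2 with hYd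
  have hs0 : 0 < s := by linarith
  have hX0 : 0 ≤ X := tsum_nonneg (fun k => by positivity)
  have hY0 : 0 ≤ Y := tsum_nonneg (fun k => by positivity)
  have hXY : X ≤ Y := by
    refine hX.tsum_le_tsum (fun k => ?_) hY
    by_cases hk : k = 0
    · simp [hk, hc0]
    · have h1 : (1:ℝ) ≤ |(k:ℝ)| := by exact_mod_cast Int.one_le_abs hk
      have h2 : 1 ≤ |(k:ℝ)| ^ s := Real.one_le_rpow h1 hs0.le
      have := hc k
      gcongr
      nlinarith
  rcases hX0.eq_or_lt with hXz | hXpos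
  · have hcz : ∀ k, c k = 0 := by
      intro k
      have h1 : c k ^ 2 ≤ 0 := by
        rw [hXz]; exact hX.le_tsum k (fun j _ => by positivity)
      exact pow_eq_zero_iff (two_ne_zero) |>.1 (le_antisymm h1 (by positivity))
    have : c = fun _ => 0 := funext hcz
    refine ⟨by rw [this]; exact summable_zero, ?_⟩
    rw [this, tsum_zero]; positivity
  · have hYpos : 0 < Y := hXpos.trans_le hXY
    set M := (Y / X) ^ (1 / (2 * s)) with hM
    have hM1 : 1 ≤ M := Real.one_le_rpow ((one_le_div hXpos).2 hXY) (by positivity)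
    have hM0 : 0 < M := by linarith
    have hMs : M ^ (2 * s) = Y / X := by
      rw [hM, ← Real.rpow_mul (by positivity)]
      rw [one_div_mul_cancel (by positivity), Real.rpow_one]
    obtain ⟨hsum, hle⟩ := h M hM1
    set d : ℤ → ℝ := fun k => 1 + (|(k : ℝ)| / M) ^ (2 * s) with hd
    have hd0 : ∀ k, 0 < d k := fun k => by simp only [hd]; positivity
    have hdk : ∀ k, c k ^ 2 * d k = c k ^ 2 + (X / Y) * (|(k : ℝ)| ^ s * c k) ^ 2 := by
      intro k
      simp only [hd]
      rw [Real.div_rpow (abs_nonneg _) hM0.le, hMs, mul_pow, ← Real.rpow_natCast (|(k:ℝ)| ^ s) 2,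
        ← Real.rpow_mul (abs_nonneg _)]
      push_cast
      rw [mul_comm s 2]
      field_simp
    have e1 : ∀ k, (c k * Real.sqrt (d k)) ^ (2:ℝ) =
        c k ^ 2 + (X / Y) * (|(k : ℝ)| ^ s * c k) ^ 2 := by
      intro k
      rw [← hdk, Real.rpow_two, mul_pow, Real.sq_sqrt (hd0 k).le]
    have e2 : ∀ k, (1 / Real.sqrt (d k)) ^ (2:ℝ) = 1 / d k := by
      intro k
      rw [Real.rpow_two, div_pow, Real.sq_sqrt (hd0 k).le, one_pow]
    have e3 : ∀ k, (c k * Real.sqrt (d k)) * (1 / Real.sqrt (d k)) = c k := by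
      intro k
      have := Real.sqrt_pos.2 (hd0 k)
      field_simp
    have hcs := Real.summable_and_inner_le_Lp_mul_Lq_tsum_of_nonneg
      (f := fun k => c k * Real.sqrt (d k)) (g := fun k => 1 / Real.sqrt (d k))
      Real.HolderConjugate.two_two (fun k => mul_nonneg (hc k) (Real.sqrt_nonneg _))
      (fun k => by positivity)
      (by simp only [e1]; exact hX.add (hY.mul_left _)) (by simp only [e2]; exact hsum)
    simp only [e1, e2, e3] at hcs
    refine ⟨hcs.1, hcs.2.trans ?_⟩
    rw [hX.tsum_add (hY.mul_left _), tsum_mul_left, ← hXd, ← hYd]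
    have : X + X / Y * Y = 2 * X := by field_simp; norm_num
    rw [this]
    calc (2 * X) ^ (1 / 2 : ℝ) * (∑' k, 1 / d k) ^ (1 / 2 : ℝ)
        ≤ (2 * X) ^ (1 / 2 : ℝ) * (K * M) ^ (1 / 2 : ℝ) := by
          gcongr
      _ = _ := by
          rw [hM, Real.mul_rpow (by positivity) (by positivity),
            Real.mul_rpow (by positivity) (by positivity),
            Real.mul_rpow (by positivity) (by positivity), ← Real.rpow_mul (by positivity),
            Real.div_rpow hYpos.le hXpos.le, mul_sub, Real.rpow_sub hXpos]
          have a1 : (1 / (2 * s) * (1 / 2)) = 1 / (4 * s) := by field_simp; norm_num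
          have a2 : (1 / 2 * (1 / (2 * s))) = 1 / (4 * s) := by field_simp; norm_num
          rw [a1, a2, mul_one]
          try ring

lemma fc_eq (hab : -π < -π + 2 * π) (f : ℝ → ℂ) (n : ℤ) :
    fourierCoeffOn hab f n = ((1 / (2 * π) : ℝ) : ℂ) *
      ∫ t in Ioo (-π) π, f t * Complex.exp (-Complex.I * (n : ℂ) * (t : ℂ)) := by
  rw [fourierCoeffOn_eq_integral, intervalIntegral.integral_of_le hab.le,
    integral_Ioc_eq_integral_Ioo]
  have e : -π + 2 * π = π := by ring
  have e2 : -π + 2 * π - -π = 2 * π := by ring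
  rw [Complex.real_smul]
  congr 1
  · rw [e2]
  · rw [e]
    apply setIntegral_congr_fun measurableSet_Ioo
    intro t _
    simp only [smul_eq_mul, fourier_coe_apply]
    rw [mul_comm]
    congr 2
    have : (π : ℂ) ≠ 0 := by exact_mod_cast Real.pi_ne_zero
    push_cast
    have h3 : ((π:ℂ) - -π) = 2 * π := by ring
    rw [h3]
    field_simp

lemma fc_parseval (hab : -π < -π + 2 * π) (f : ℝ → ℝ) (hf : Continuous f) :
    HasSum (fun k => ‖fourierCoeffOn hab (fun t => (f t : ℂ)) k‖ ^ 2)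
      ((1 / (2 * π)) * ∫ t in Ioo (-π) π, f t ^ 2) := by
  have hc : Continuous (fun t => (f t : ℂ)) := Complex.continuous_ofReal.comp hf
  have h := hasSum_sq_fourierCoeffOn (f := fun t => (f t : ℂ)) hab (by
    obtain ⟨C, hC⟩ := (isCompact_Icc (a := -π) (b := -π + 2 * π)).exists_bound_of_continuousOn
      hc.continuousOn
    refine MemLp.of_bound hc.aestronglyMeasurable C ?_
    filter_upwards [ae_restrict_mem measurableSet_Ioc] with t ht
    exact hC t (Ioc_subset_Icc_self ht))
  rw [intervalIntegral.integral_of_le hab.le, integral_Ioc_eq_integral_Ioo] at h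
  have e : -π + 2 * π = π := by ring
  have e2 : -π + 2 * π - -π = 2 * π := by ring
  have e3 : ∫ t in Ioo (-π) (-π + 2 * π), ‖(f t : ℂ)‖ ^ 2 = ∫ t in Ioo (-π) π, f t ^ 2 := by
    rw [e]; simp
  rw [e2, e3, smul_eq_mul, ← one_div] at h
  exact h

lemma agmon (s : ℝ) (hs : 1 / 2 < s) :
    ∃ K : ℝ, 0 < K ∧ ∀ g h : ℝ → ℝ, Continuous g → Continuous h →
      (∀ t, g (t + 2 * π) = g t) → (∫ t in Ioo (-π) π, g t) = 0 →
      (∀ k : ℤ, (∫ t in Ioo (-π) π, (h t : ℂ) * Complex.exp (-Complex.I * (k : ℂ) * (t : ℂ)))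
            = (|(k : ℝ)| ^ s : ℝ) *
              ∫ t in Ioo (-π) π, (g t : ℂ) *
                  Complex.exp (-Complex.I * (k : ℂ) * (t : ℂ))) →
      ∀ t ∈ Ioo (-π) π, |g t| ≤ K * (∫ t in Ioo (-π) π, g t ^ 2) ^ ((1 / 2 : ℝ) * (1 - 1 / (2 * s))) *
        (∫ t in Ioo (-π) π, h t ^ 2) ^ (1 / (4 * s)) := by
  obtain ⟨K, hK, H⟩ := aux_seq s hs
  have hs0 : 0 < s := by linarith
  set A : ℝ := (1 / (2 * π)) ^ ((1 / 2 : ℝ) * (1 - 1 / (2 * s))) with hA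
  set B : ℝ := (1 / (2 * π)) ^ (1 / (4 * s)) with hB
  refine ⟨K * A * B, by positivity, fun g h hg hh hper hmean hcoef t ht => ?_⟩
  have hT : Fact (0 < 2 * π) := ⟨by positivity⟩
  have hab : -π < -π + 2 * π := by linarith [hT.out]
  set c : ℤ → ℂ := fun k => fourierCoeffOn hab (fun t => (g t : ℂ)) k with hc
  have hcd : ∀ k : ℤ, fourierCoeffOn hab (fun t => (h t : ℂ)) k = (|(k : ℝ)| ^ s : ℝ) * c k := by
    intro k
    simp only [hc]
    rw [fc_eq, fc_eq, hcoef k]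
    ring
  have hc0 : c 0 = 0 := by
    simp only [hc]
    rw [fc_eq]
    have : (∫ t in Ioo (-π) π, (g t : ℂ) * Complex.exp (-Complex.I * ((0:ℤ) : ℂ) * (t : ℂ)))
        = ((∫ t in Ioo (-π) π, g t : ℝ) : ℂ) := by
      rw [← integral_complex_ofReal]
      simp
    rw [this, hmean]
    simp
  have p1 := fc_parseval hab g hg
  have p2 := fc_parseval hab h hh
  have e2 : (fun k => ‖fourierCoeffOn hab (fun t => (h t : ℂ)) k‖ ^ 2) =
      fun k : ℤ => (|(k : ℝ)| ^ s * ‖c k‖) ^ 2 := by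
    funext k
    rw [hcd, norm_mul, Complex.norm_real, Real.norm_of_nonneg (by positivity)]
  rw [e2] at p2
  obtain ⟨hsum, hle⟩ := H (fun k => ‖c k‖) (fun k => norm_nonneg _) (by simp [hc0])
    p1.summable p2.summable
  rw [p1.tsum_eq, p2.tsum_eq, Real.mul_rpow (by positivity) (integral_nonneg fun t => by positivity),
    Real.mul_rpow (by positivity) (integral_nonneg fun t => by positivity)] at hle
  have hgc : Continuous (AddCircle.liftIco (2 * π) (-π) (fun t => (g t : ℂ))) := by
    apply AddCircle.liftIco_continuous
    · simp only [hper]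
    · exact (Complex.continuous_ofReal.comp hg).continuousOn
  have hs' := has_pointwise_sum_fourier_series_of_summable (f := ⟨_, hgc⟩) (by
    refine Summable.of_norm ?_
    refine hsum.congr (fun k => ?_)
    simp only [hc, ContinuousMap.coe_mk]
    rw [fourierCoeff_liftIco_eq]) (t : AddCircle (2 * π))
  have hval : AddCircle.liftIco (2 * π) (-π) (fun t => (g t : ℂ)) (t : AddCircle (2 * π)) = g t :=
    AddCircle.liftIco_coe_apply ⟨ht.1.le, by have := ht.2; linarith⟩
  simp only [ContinuousMap.coe_mk] at hs'
  rw [hval] at hs'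
  have hb : ‖(g t : ℂ)‖ ≤ ∑' k, ‖c k‖ := by
    rw [← hs'.tsum_eq]
    refine tsum_of_norm_bounded hsum.hasSum (fun k => ?_)
    rw [fourierCoeff_liftIco_eq, norm_smul, fourier_apply, Circle.norm_coe, mul_one]
  rw [Complex.norm_real, Real.norm_eq_abs] at hb
  refine hb.trans (hle.trans (le_of_eq ?_))
  ring

lemma holder_abs {A B : Type*} [MeasurableSpace A] [MeasurableSpace B] (μ : Measure A)
    (ν : Measure B) [SFinite μ] [SFinite ν] (Pu Pw Q R f : A × B → ENNReal)
    (hPu : Measurable Pu) (hPw : Measurable Pw) (hQ : Measurable Q) (hR : Measurable R)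
    (hf : Measurable f)
    (K : ENNReal) (α β : ℝ) (hα : 0 ≤ α) (hβ : 0 ≤ β) (hαβ : α + β = 1 / 2)
    (hle : ∀ p, ∀ᵐ t ∂ν, f (p, t) ≤ K * (∫⁻ t, Q (p, t) ∂ν) ^ α * (∫⁻ t, R (p, t) ∂ν) ^ β *
      (Pu (p, t) ^ (1 / 2 : ℝ) * Pw (p, t) ^ (1 / 2 : ℝ))) :
    ∫⁻ x, f x ∂(μ.prod ν) ≤ K * (∫⁻ x, Q x ∂(μ.prod ν)) ^ α * (∫⁻ x, R x ∂(μ.prod ν)) ^ β *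
      (∫⁻ p, (∫⁻ t, Pu (p, t) ∂ν) ^ (2 : ℝ) ∂μ) ^ (1 / 4 : ℝ) *
      (∫⁻ p, (∫⁻ t, Pw (p, t) ∂ν) ^ (2 : ℝ) ∂μ) ^ (1 / 4 : ℝ) := by
  rw [lintegral_prod _ hf.aemeasurable, lintegral_prod _ hQ.aemeasurable,
    lintegral_prod _ hR.aemeasurable]
  have mQ : Measurable (fun p => ∫⁻ t, Q (p, t) ∂ν) := hQ.lintegral_prod_right'
  have mR : Measurable (fun p => ∫⁻ t, R (p, t) ∂ν) := hR.lintegral_prod_right'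
  have mPu : Measurable (fun p => ∫⁻ t, Pu (p, t) ∂ν) := hPu.lintegral_prod_right'
  have mPw : Measurable (fun p => ∫⁻ t, Pw (p, t) ∂ν) := hPw.lintegral_prod_right'
  have step : ∀ p, ∫⁻ t, f (p, t) ∂ν ≤ K * ((∫⁻ t, Q (p, t) ∂ν) ^ α * (∫⁻ t, R (p, t) ∂ν) ^ β *
      ((∫⁻ t, Pu (p, t) ∂ν) ^ (2 : ℝ)) ^ (1 / 4 : ℝ) *
      ((∫⁻ t, Pw (p, t) ∂ν) ^ (2 : ℝ)) ^ (1 / 4 : ℝ)) := by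
    intro p
    have hu : Measurable (fun t => Pu (p, t)) := hPu.comp measurable_prodMk_left
    have hw : Measurable (fun t => Pw (p, t)) := hPw.comp measurable_prodMk_left
    calc ∫⁻ t, f (p, t) ∂ν ≤ ∫⁻ t, K * (∫⁻ t, Q (p, t) ∂ν) ^ α * (∫⁻ t, R (p, t) ∂ν) ^ β *
      (Pu (p, t) ^ (1 / 2 : ℝ) * Pw (p, t) ^ (1 / 2 : ℝ)) ∂ν := lintegral_mono_ae (hle p)
      _ = K * (∫⁻ t, Q (p, t) ∂ν) ^ α * (∫⁻ t, R (p, t) ∂ν) ^ β *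
        ∫⁻ t, (Pu (p, t) ^ (1 / 2 : ℝ) * Pw (p, t) ^ (1 / 2 : ℝ)) ∂ν := by
          rw [lintegral_const_mul]
          exact (hu.pow_const _).mul (hw.pow_const _)
      _ ≤ K * (∫⁻ t, Q (p, t) ∂ν) ^ α * (∫⁻ t, R (p, t) ∂ν) ^ β *
        ((∫⁻ t, Pu (p, t) ∂ν) ^ (1 / 2 : ℝ) * (∫⁻ t, Pw (p, t) ∂ν) ^ (1 / 2 : ℝ)) := by
          gcongr
          have := ENNReal.lintegral_mul_le_Lp_mul_Lq ν Real.HolderConjugate.two_two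
            (hu.pow_const (1 / 2 : ℝ)).aemeasurable (hw.pow_const (1 / 2 : ℝ)).aemeasurable
          simp only [Pi.mul_apply, ← ENNReal.rpow_mul] at this
          norm_num at this
          norm_num
          exact this
      _ = _ := by
          rw [← ENNReal.rpow_mul, ← ENNReal.rpow_mul]
          norm_num
          ring
  calc _ ≤ ∫⁻ p, K * ((∫⁻ t, Q (p, t) ∂ν) ^ α * (∫⁻ t, R (p, t) ∂ν) ^ β *
      ((∫⁻ t, Pu (p, t) ∂ν) ^ (2 : ℝ)) ^ (1 / 4 : ℝ) *
      ((∫⁻ t, Pw (p, t) ∂ν) ^ (2 : ℝ)) ^ (1 / 4 : ℝ)) ∂μ := lintegral_mono step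
    _ = K * ∫⁻ p, ((∫⁻ t, Q (p, t) ∂ν) ^ α * (∫⁻ t, R (p, t) ∂ν) ^ β *
      ((∫⁻ t, Pu (p, t) ∂ν) ^ (2 : ℝ)) ^ (1 / 4 : ℝ) *
      ((∫⁻ t, Pw (p, t) ∂ν) ^ (2 : ℝ)) ^ (1 / 4 : ℝ)) ∂μ := by
        rw [lintegral_const_mul]
        exact (((mQ.pow_const _).mul (mR.pow_const _)).mul ((mPu.pow_const _).pow_const _)).mul
          ((mPw.pow_const _).pow_const _)
    _ ≤ _ := by
        have := ENNReal.lintegral_prod_norm_pow_le (μ := μ) (Finset.univ : Finset (Fin 4))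
          (f := ![fun p => (∫⁻ t, Q (p, t) ∂ν), fun p => (∫⁻ t, R (p, t) ∂ν),
            fun p => (∫⁻ t, Pu (p, t) ∂ν) ^ (2 : ℝ), fun p => (∫⁻ t, Pw (p, t) ∂ν) ^ (2 : ℝ)])
          (p := ![α, β, 1 / 4, 1 / 4])
          (by
            intro i _
            fin_cases i
            · exact mQ.aemeasurable
            · exact mR.aemeasurable
            · exact (mPu.pow_const _).aemeasurable
            · exact (mPw.pow_const _).aemeasurable)
          (by simp [Fin.sum_univ_four]; linarith)
          (by
            intro i _
            fin_cases i <;> simp [hα, hβ])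
        simp only [Fin.prod_univ_four, Matrix.cons_val_zero, Matrix.cons_val_one,
          Matrix.cons_val] at this
        rw [mul_assoc K, mul_assoc K, mul_assoc K]
        gcongr

lemma hasFDerivAt_vint (F : (ℝ × ℝ) × ℝ → ℝ) (hF : ContDiff ℝ 1 F) (p : ℝ × ℝ) :
    HasFDerivAt (fun p => ∫ t in Ioo (-π) π, F (p, t))
      (∫ t in Ioo (-π) π, (fderiv ℝ F (p, t)).comp (ContinuousLinearMap.inl ℝ (ℝ × ℝ) ℝ)) p := by
  have hc : Continuous F := hF.continuous
  have hd : Continuous (fderiv ℝ F) := hF.continuous_fderiv (by norm_num)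
  have hL : Continuous (fun x => (fderiv ℝ F x).comp (ContinuousLinearMap.inl ℝ (ℝ × ℝ) ℝ)) := by
    fun_prop
  obtain ⟨C, hC⟩ := ((isCompact_closedBall p 1).prod
    (isCompact_Icc (a := -π) (b := π))).exists_bound_of_continuousOn hL.continuousOn
  refine hasFDerivAt_integral_of_dominated_of_fderiv_le (bound := fun _ => C)
    (F := fun p t => F (p, t))
    (F' := fun p t => (fderiv ℝ F (p, t)).comp (ContinuousLinearMap.inl ℝ (ℝ × ℝ) ℝ))
    (Metric.closedBall_mem_nhds p one_pos) ?_ ?_ ?_ ?_ ?_ ?_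
  · exact Filter.Eventually.of_forall fun q =>
      (hc.comp (by fun_prop : Continuous fun t : ℝ => (q, t))).aestronglyMeasurable
  · exact ((hc.comp (by fun_prop : Continuous fun t : ℝ => (p, t))).continuousOn.integrableOn_Icc
      (a := -π) (b := π)).mono_set Ioo_subset_Icc_self
  · exact (hL.comp (by fun_prop : Continuous fun t : ℝ => (p, t))).aestronglyMeasurable
  · filter_upwards [ae_restrict_mem measurableSet_Ioo] with t ht q hq
    exact hC (q, t) ⟨hq, Ioo_subset_Icc_self ht⟩
  · exact integrable_const C
  · refine Filter.Eventually.of_forall fun t q _ => ?_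
    have h1 : HasFDerivAt F (fderiv ℝ F (q, t)) (q, t) :=
      (hF.differentiable (by norm_num) _).hasFDerivAt
    exact h1.comp q (hasFDerivAt_prodMk_left q t)

lemma contDiff_vint (F : (ℝ × ℝ) × ℝ → ℝ) (hF : ContDiff ℝ 1 F) :
    ContDiff ℝ 1 (fun p => ∫ t in Ioo (-π) π, F (p, t)) := by
  rw [contDiff_one_iff_fderiv]
  refine ⟨fun p => (hasFDerivAt_vint F hF p).differentiableAt, ?_⟩
  have hd : Continuous (fderiv ℝ F) := hF.continuous_fderiv (by norm_num)
  have hL : Continuous (fun x => (fderiv ℝ F x).comp (ContinuousLinearMap.inl ℝ (ℝ × ℝ) ℝ)) := by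
    fun_prop
  have : fderiv ℝ (fun p => ∫ t in Ioo (-π) π, F (p, t)) = fun p =>
      ∫ t in Icc (-π) π, (fderiv ℝ F (p, t)).comp (ContinuousLinearMap.inl ℝ (ℝ × ℝ) ℝ) := by
    funext p
    rw [(hasFDerivAt_vint F hF p).fderiv, integral_Icc_eq_integral_Ioo]
  rw [this]
  exact continuous_parametric_integral_of_continuous
    (f := fun p t => (fderiv ℝ F (p, t)).comp (ContinuousLinearMap.inl ℝ (ℝ × ℝ) ℝ))
    (by exact hL) isCompact_Icc

lemma integrable_box (Ω : Set (ℝ × ℝ)) (hb : Bornology.IsBounded Ω)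
    (f : (ℝ × ℝ) × ℝ → ℝ) (hf : Continuous f) :
    IntegrableOn f (Ω ×ˢ Ioo (-π) π) := by
  have hK : IsCompact (closure Ω ×ˢ Icc (-π) π) := hb.isCompact_closure.prod isCompact_Icc
  exact (hf.continuousOn.integrableOn_compact hK).mono_set
    (prod_mono subset_closure Ioo_subset_Icc_self)

lemma lint_box (Ω : Set (ℝ × ℝ)) (hb : Bornology.IsBounded Ω)
    (f : (ℝ × ℝ) × ℝ → ℝ) (hf : Continuous f) (h0 : ∀ x, 0 ≤ f x) :
    ∫⁻ x in Ω ×ˢ Ioo (-π) π, ENNReal.ofReal (f x) =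
      ENNReal.ofReal (∫ x in Ω ×ˢ Ioo (-π) π, f x) :=
  (ofReal_integral_eq_lintegral_ofReal (integrable_box Ω hb f hf)
    (Filter.Eventually.of_forall h0)).symm

lemma lint_line (f : ℝ → ℝ) (hf : Continuous f) (h0 : ∀ x, 0 ≤ f x) :
    ∫⁻ x in Ioo (-π) π, ENNReal.ofReal (f x) =
      ENNReal.ofReal (∫ x in Ioo (-π) π, f x) :=
  (ofReal_integral_eq_lintegral_ofReal
    ((hf.continuousOn.integrableOn_Icc (a := -π) (b := π)).mono_set Ioo_subset_Icc_self)
    (Filter.Eventually.of_forall h0)).symm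

lemma cont_dir (u : (ℝ × ℝ) × ℝ → Fin 3 → ℝ) (hu : ContDiff ℝ (⊤ : ℕ∞) u) (i j : Fin 3) :
    Continuous (fun x => fderiv ℝ u x (dir3 j) i) := by
  have hd : Continuous (fderiv ℝ u) := hu.continuous_fderiv (by simp)
  have h2 : Continuous (fun x => fderiv ℝ u x (dir3 j)) := by fun_prop
  exact (continuous_apply i).comp h2

lemma hasFDerivAt_comp_i (u : (ℝ × ℝ) × ℝ → Fin 3 → ℝ) (hu : ContDiff ℝ (⊤ : ℕ∞) u) (i : Fin 3)
    (x : (ℝ × ℝ) × ℝ) :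
    HasFDerivAt (fun x => u x i)
      ((ContinuousLinearMap.proj (R := ℝ) (φ := fun _ : Fin 3 => ℝ) i).comp (fderiv ℝ u x)) x := by
  have h : HasFDerivAt u (fderiv ℝ u x) x := (hu.differentiable (by simp) x).hasFDerivAt
  exact (hasFDerivAt_pi'.1 h) i

lemma fderiv_comp_i (u : (ℝ × ℝ) × ℝ → Fin 3 → ℝ) (hu : ContDiff ℝ (⊤ : ℕ∞) u) (i : Fin 3)
    (x y : (ℝ × ℝ) × ℝ) : fderiv ℝ (fun x => u x i) x y = fderiv ℝ u x y i := by
  rw [(hasFDerivAt_comp_i u hu i x).fderiv]; rfl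

lemma horiz_bound (u : (ℝ × ℝ) × ℝ → Fin 3 → ℝ) (hu : ContDiff ℝ (⊤ : ℕ∞) u)
    (x : (ℝ × ℝ) × ℝ) :
    ‖(fderiv ℝ (fun x => ∑ i : Fin 3, u x i ^ 2) x).comp
      (ContinuousLinearMap.inl ℝ (ℝ × ℝ) ℝ)‖ ≤
      4 * (Real.sqrt (∑ i : Fin 3, u x i ^ 2) *
        Real.sqrt (∑ i : Fin 3, ∑ j : Fin 3, (fderiv ℝ u x (dir3 j) i) ^ 2)) := by
  refine ContinuousLinearMap.opNorm_le_bound _ (by positivity) (fun q => ?_)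
  obtain ⟨a, b⟩ := q
  have h1 : HasFDerivAt (fun x => ∑ i : Fin 3, u x i ^ 2)
      (∑ i : Fin 3, (2 * u x i) • ((ContinuousLinearMap.proj (R := ℝ)
        (φ := fun _ : Fin 3 => ℝ) i).comp (fderiv ℝ u x))) x := by
    refine HasFDerivAt.fun_sum (fun i _ => ?_)
    have := (hasFDerivAt_comp_i u hu i x).pow 2
    simpa using this
  rw [h1.fderiv]
  have hdir : ((a, b), (0:ℝ)) = a • dir3 0 + b • dir3 1 := by
    simp [dir3]
  have ha : |a| ≤ ‖(a, b)‖ := by rw [← Real.norm_eq_abs]; exact norm_fst_le (a, b)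
  have hb : |b| ≤ ‖(a, b)‖ := by rw [← Real.norm_eq_abs]; exact norm_snd_le (a, b)
  set n := ‖(a, b)‖
  have hn : 0 ≤ n := norm_nonneg _
  have e : ((∑ i : Fin 3, (2 * u x i) • ((ContinuousLinearMap.proj (R := ℝ)
        (φ := fun _ : Fin 3 => ℝ) i).comp (fderiv ℝ u x))).comp
          (ContinuousLinearMap.inl ℝ (ℝ × ℝ) ℝ)) (a, b) =
      ∑ i : Fin 3, u x i * (2 * (a * fderiv ℝ u x (dir3 0) i + b * fderiv ℝ u x (dir3 1) i)) := by
    simp only [ContinuousLinearMap.comp_apply, ContinuousLinearMap.inl_apply, hdir,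
      _root_.sum_apply, _root_.smul_apply, map_add, map_smul,
      ContinuousLinearMap.proj_apply, smul_eq_mul]
    rw [Finset.mul_sum, Finset.mul_sum, ← Finset.sum_add_distrib]
    refine Finset.sum_congr rfl (fun i _ => by ring)
  rw [e, Real.norm_eq_abs]
  set P := ∑ i : Fin 3, u x i ^ 2
  set Q := ∑ i : Fin 3, ∑ j : Fin 3, (fderiv ℝ u x (dir3 j) i) ^ 2 with hQ
  have hQ0 : 0 ≤ Q := by positivity
  have hP0 : 0 ≤ P := by positivity
  have hcs := Finset.sum_mul_sq_le_sq_mul_sq Finset.univ (fun i => u x i)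
    (fun i => 2 * (a * fderiv ℝ u x (dir3 0) i + b * fderiv ℝ u x (dir3 1) i))
  have h2 : ∑ i : Fin 3, (2 * (a * fderiv ℝ u x (dir3 0) i + b * fderiv ℝ u x (dir3 1) i)) ^ 2
      ≤ 16 * n ^ 2 * Q := by
    rw [hQ, Finset.mul_sum]
    refine Finset.sum_le_sum (fun i _ => ?_)
    rw [Fin.sum_univ_three]
    have ha2 : a ^ 2 ≤ n ^ 2 := sq_le_sq' (by linarith [abs_le.1 ha]) (abs_le.1 ha).2
    have hb2 : b ^ 2 ≤ n ^ 2 := sq_le_sq' (by linarith [abs_le.1 hb]) (abs_le.1 hb).2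
    set X := fderiv ℝ u x (dir3 0) i
    set Y := fderiv ℝ u x (dir3 1) i
    set Z := fderiv ℝ u x (dir3 2) i
    have k1 : a ^ 2 * X ^ 2 ≤ n ^ 2 * X ^ 2 := by gcongr
    have k2 : b ^ 2 * Y ^ 2 ≤ n ^ 2 * Y ^ 2 := by gcongr
    have k3 : 0 ≤ n ^ 2 * Z ^ 2 := by positivity
    have k4 : 0 ≤ n ^ 2 * X ^ 2 := by positivity
    have k5 : 0 ≤ n ^ 2 * Y ^ 2 := by positivity
    nlinarith [sq_nonneg (a * X - b * Y)]
  apply abs_le_of_sq_le_sq _ (by positivity)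
  refine hcs.trans ?_
  have : (4 * (√P * √Q) * n) ^ 2 = P * (16 * n ^ 2 * Q) := by
    rw [mul_pow, mul_pow, mul_pow, Real.sq_sqrt hP0, Real.sq_sqrt hQ0]; ring
  rw [this]
  gcongr

lemma lady :
    ∃ K : ℝ, 0 < K ∧ ∀ (Ω : Set (ℝ × ℝ)), IsOpen Ω → Bornology.IsBounded Ω →
      ∀ u : (ℝ × ℝ) × ℝ → Fin 3 → ℝ, ContDiff ℝ (⊤ : ℕ∞) u →
      (∀ (p : ℝ × ℝ) t, p ∉ Ω → u (p, t) = 0) →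
      ∫⁻ p in Ω, (∫⁻ t in Ioo (-π) π, ENNReal.ofReal (∑ i : Fin 3, u (p, t) i ^ 2)) ^ (2 : ℝ) ≤
        ENNReal.ofReal K *
          ((∫⁻ x in Ω ×ˢ Ioo (-π) π, ENNReal.ofReal (∑ i : Fin 3, u x i ^ 2)) *
          (∫⁻ x in Ω ×ˢ Ioo (-π) π, ENNReal.ofReal
            (∑ i : Fin 3, ∑ j : Fin 3, (fderiv ℝ u x (dir3 j) i) ^ 2))) := by
  set C := lintegralPowLePowLIntegralFDerivConst (volume : Measure (ℝ × ℝ)) 2 with hC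
  refine ⟨(C : ℝ) * 16 + 1, by positivity, fun Ω ho hb u hu hv => ?_⟩
  set P : (ℝ × ℝ) × ℝ → ℝ := fun x => ∑ i : Fin 3, u x i ^ 2 with hP
  set Q : (ℝ × ℝ) × ℝ → ℝ :=
    fun x => ∑ i : Fin 3, ∑ j : Fin 3, (fderiv ℝ u x (dir3 j) i) ^ 2 with hQ
  have hui : ∀ i, ContDiff ℝ (⊤ : ℕ∞) (fun x => u x i) := fun i => contDiff_pi.1 hu i
  have hPc : ContDiff ℝ 1 P := by
    refine ContDiff.sum (fun i _ => ?_)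
    exact ((hui i).of_le (by simp)).pow 2
  have hQc : Continuous Q := by
    refine continuous_finsetSum _ (fun i _ => continuous_finsetSum _ (fun j _ => ?_))
    exact (cont_dir u hu i j).pow 2
  have hP0 : ∀ x, 0 ≤ P x := fun x => by simp only [hP]; positivity
  have hQ0 : ∀ x, 0 ≤ Q x := fun x => by simp only [hQ]; positivity
  set U : ℝ × ℝ → ℝ := fun p => ∫ t in Ioo (-π) π, P (p, t) with hU
  have hU0 : ∀ p, 0 ≤ U p := fun p => integral_nonneg fun t => hP0 _
  have hUc : ContDiff ℝ 1 U := contDiff_vint P hPc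
  have hPz : ∀ p t, p ∉ Ω → P (p, t) = 0 := fun p t hp => by simp [hP, hv p t hp]
  have hUz : ∀ p, p ∉ Ω → U p = 0 := fun p hp => by simp [hU, hPz p _ hp]
  have hUs : HasCompactSupport U := by
    refine HasCompactSupport.of_support_subset_isCompact hb.isCompact_closure ?_
    intro p hp
    by_contra h
    exact hp (hUz p (fun h' => h (subset_closure h')))
  have hG := lintegral_pow_le_pow_lintegral_fderiv (volume : Measure (ℝ × ℝ)) hUc hUs (p := 2)
    (by
      have : Module.finrank ℝ (ℝ × ℝ) = 2 := by simp
      rw [this]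
      exact_mod_cast Real.HolderConjugate.two_two)
  have hUlin : ∀ p, ∫⁻ t in Ioo (-π) π, ENNReal.ofReal (P (p, t)) = ‖U p‖ₑ := by
    intro p
    rw [lint_line (fun t => P (p, t)) (hPc.continuous.comp (by fun_prop)) (fun t => hP0 _),
      Real.enorm_eq_ofReal (hU0 p)]
  have hmP : Measurable (fun x => ENNReal.ofReal (P x)) :=
    hPc.continuous.measurable.ennreal_ofReal
  have hmQ : Measurable (fun x => ENNReal.ofReal (Q x)) := hQc.measurable.ennreal_ofReal
  have hpt : ∀ p, ‖fderiv ℝ U p‖ₑ ≤ ∫⁻ t in Ioo (-π) π,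
      4 * (ENNReal.ofReal (P (p, t)) ^ (1 / 2 : ℝ) * ENNReal.ofReal (Q (p, t)) ^ (1 / 2 : ℝ)) := by
    intro p
    rw [(hasFDerivAt_vint P hPc p).fderiv]
    refine (enorm_integral_le_lintegral_enorm _).trans (lintegral_mono fun t => ?_)
    rw [← ofReal_norm]
    refine (ENNReal.ofReal_le_ofReal (horiz_bound u hu (p, t))).trans (le_of_eq ?_)
    rw [ENNReal.ofReal_mul (by norm_num), ENNReal.ofReal_mul (by positivity),
      Real.sqrt_eq_rpow, Real.sqrt_eq_rpow, ENNReal.ofReal_rpow_of_nonneg (hP0 _) (by norm_num),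
      ENNReal.ofReal_rpow_of_nonneg (hQ0 _) (by norm_num)]
    simp [hP, hQ]
  have hfd0 : ∀ p, p ∉ Ω → ‖fderiv ℝ U p‖ₑ = 0 := by
    intro p hp
    have := hpt p
    simp only [hPz p _ hp, ENNReal.ofReal_zero] at this
    simpa using this
  set IP := ∫⁻ x in Ω ×ˢ Ioo (-π) π, ENNReal.ofReal (P x) with hIP
  set IQ := ∫⁻ x in Ω ×ˢ Ioo (-π) π, ENNReal.ofReal (Q x) with hIQ
  have hfd : ∫⁻ p, ‖fderiv ℝ U p‖ₑ ≤ 4 * (IP ^ (1 / 2 : ℝ) * IQ ^ (1 / 2 : ℝ)) := by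
    have hind : (fun p => ‖fderiv ℝ U p‖ₑ) = Ω.indicator (fun p => ‖fderiv ℝ U p‖ₑ) := by
      funext p
      by_cases hp : p ∈ Ω
      · simp [hp]
      · rw [indicator_of_notMem hp, hfd0 p hp]
    rw [hind, lintegral_indicator ho.measurableSet]
    refine (lintegral_mono hpt).trans ?_
    have hm1 := hmP.pow_const (1 / 2 : ℝ)
    have hm2 := hmQ.pow_const (1 / 2 : ℝ)
    have hm12 : Measurable (fun x => ENNReal.ofReal (P x) ^ (1 / 2 : ℝ) *
      ENNReal.ofReal (Q x) ^ (1 / 2 : ℝ)) := hm1.mul hm2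
    rw [← lintegral_prod (f := fun x : (ℝ × ℝ) × ℝ => 4 * (ENNReal.ofReal (P x) ^ (1 / 2 : ℝ) *
      ENNReal.ofReal (Q x) ^ (1 / 2 : ℝ))) (hm12.const_mul 4).aemeasurable,
      Measure.prod_restrict, ← Measure.volume_eq_prod, lintegral_const_mul _ hm12]
    gcongr
    have := ENNReal.lintegral_mul_le_Lp_mul_Lq (volume.restrict (Ω ×ˢ Ioo (-π) π))
      Real.HolderConjugate.two_two hm1.aemeasurable hm2.aemeasurable
    simp only [Pi.mul_apply, ← ENNReal.rpow_mul] at this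
    norm_num at this
    norm_num
    exact this
  calc _ ≤ ∫⁻ p, ‖U p‖ₑ ^ (2 : ℝ) := by
        have hUlin' : ∀ p, ∫⁻ t in Ioo (-π) π, ENNReal.ofReal (∑ i : Fin 3, u (p, t) i ^ 2) =
          ‖U p‖ₑ := hUlin
        simp only [hUlin']
        exact setLIntegral_le_lintegral _ _
    _ ≤ C * (∫⁻ p, ‖fderiv ℝ U p‖ₑ) ^ (2 : ℝ) := hG
    _ ≤ C * (4 * (IP ^ (1 / 2 : ℝ) * IQ ^ (1 / 2 : ℝ))) ^ (2 : ℝ) := by gcongr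
    _ = ENNReal.ofReal ((C : ℝ) * 16) * (IP * IQ) := by
        rw [ENNReal.mul_rpow_of_nonneg _ _ (by norm_num),
          ENNReal.mul_rpow_of_nonneg _ _ (by norm_num), ← ENNReal.rpow_mul, ← ENNReal.rpow_mul,
          ENNReal.ofReal_mul (by positivity), ENNReal.ofReal_coe_nnreal]
        norm_num
        ring
    _ ≤ _ := by
        gcongr
        linarith

lemma mean_deriv (v : (ℝ × ℝ) × ℝ → Fin 3 → ℝ) (hv : ContDiff ℝ (⊤ : ℕ∞) v)
    (hper : ∀ p t, v (p, t + 2 * π) = v (p, t))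
    (hmean : ∀ (p : ℝ × ℝ) (i : Fin 3), ∫ t in Ioo (-π) π, v (p, t) i = 0)
    (p : ℝ × ℝ) (i j : Fin 3) :
    ∫ t in Ioo (-π) π, fderiv ℝ v (p, t) (dir3 j) i = 0 := by
  have hvi : ContDiff ℝ 1 (fun x => v x i) := (contDiff_pi.1 hv i).of_le (by simp)
  have hor : ∀ q : ℝ × ℝ, ∫ t in Ioo (-π) π, fderiv ℝ v (p, t) (q, 0) i = 0 := by
    intro q
    have h1 := hasFDerivAt_vint (fun x => v x i) hvi p
    simp only [hmean] at h1
    have h2 := h1.unique (hasFDerivAt_const (0:ℝ) p)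
    have h3 := congrArg (fun L : (ℝ × ℝ) →L[ℝ] ℝ => L q) h2
    have hd : Continuous (fderiv ℝ (fun x => v x i)) := hvi.continuous_fderiv (by norm_num)
    rw [ContinuousLinearMap.integral_apply] at h3
    · simpa [fderiv_comp_i v hv] using h3
    · have hL : Continuous (fun t : ℝ => (fderiv ℝ (fun x => v x i) (p, t)).comp
        (ContinuousLinearMap.inl ℝ (ℝ × ℝ) ℝ)) := by fun_prop
      exact (hL.continuousOn.integrableOn_Icc (a := -π) (b := π)).mono_set Ioo_subset_Icc_self
  fin_cases j
  · exact hor (1, 0)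
  · exact hor (0, 1)
  · have hle : -π ≤ π := by linarith [Real.pi_pos]
    change ∫ t in Ioo (-π) π, fderiv ℝ v (p, t) (dir3 2) i = 0
    rw [← integral_Ioc_eq_integral_Ioo, ← intervalIntegral.integral_of_le hle]
    have hder : ∀ t : ℝ, HasDerivAt (fun t => v (p, t) i) (fderiv ℝ v (p, t) (dir3 2) i) t := by
      intro t
      have h1 := (hasFDerivAt_comp_i v hv i (p, t)).comp_hasDerivAt t
        ((hasDerivAt_const t p).prodMk (hasDerivAt_id t))
      exact h1
    rw [intervalIntegral.integral_eq_sub_of_hasDerivAt (f := fun t => v (p, t) i)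
      (fun t _ => hder t)]
    · have := hper p (-π)
      have e : -π + 2 * π = π := by ring
      rw [e] at this
      simp [this]
    · have : Continuous (fun t : ℝ => fderiv ℝ v (p, t) (dir3 2) i) :=
        (cont_dir v hv i 2).comp (by fun_prop)
      exact this.intervalIntegrable _ _

lemma per_deriv (v : (ℝ × ℝ) × ℝ → Fin 3 → ℝ)
    (hper : ∀ p t, v (p, t + 2 * π) = v (p, t)) (p : ℝ × ℝ) (t : ℝ) :
    fderiv ℝ v (p, t + 2 * π) = fderiv ℝ v (p, t) := by
  have h : (fun x : (ℝ × ℝ) × ℝ => v (x + ((0, 0), 2 * π))) = v := by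
    funext x
    obtain ⟨⟨a, b⟩, c⟩ := x
    have := hper (a, b) c
    simpa using this
  have h2 := fderiv_comp_add_right (𝕜 := ℝ) (f := v) (x := (p, t)) (((0, 0), 2 * π) : (ℝ × ℝ) × ℝ)
  rw [h] at h2
  rw [h2]
  obtain ⟨a, b⟩ := p
  simp

lemma trilinear_bound (u w : Fin 3 → ℝ) (V : Fin 3 → Fin 3 → ℝ) (G : ℝ)
    (hV : ∀ i j, |V i j| ≤ G) :
    |∑ i : Fin 3, (∑ j : Fin 3, u j * V i j) * w i| ≤
      3 * G * (Real.sqrt (∑ i, u i ^ 2) * Real.sqrt (∑ i, w i ^ 2)) := by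
  have hG : 0 ≤ G := (abs_nonneg _).trans (hV 0 0)
  have hsum : ∀ a : Fin 3 → ℝ, ∑ i, |a i| ≤ Real.sqrt 3 * Real.sqrt (∑ i, a i ^ 2) := by
    intro a
    rw [← Real.sqrt_mul (by norm_num)]
    apply Real.le_sqrt_of_sq_le
    have := sq_sum_le_card_mul_sum_sq (s := (Finset.univ : Finset (Fin 3))) (f := fun i => |a i|)
    simpa using this
  calc _ ≤ ∑ i : Fin 3, (∑ j : Fin 3, |u j| * G) * |w i| := by
        refine (Finset.abs_sum_le_sum_abs _ _).trans (Finset.sum_le_sum fun i _ => ?_)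
        rw [abs_mul]
        gcongr
        refine (Finset.abs_sum_le_sum_abs _ _).trans (Finset.sum_le_sum fun j _ => ?_)
        rw [abs_mul]
        gcongr
        exact hV i j
    _ = G * ((∑ j, |u j|) * ∑ i, |w i|) := by
        rw [← Finset.mul_sum, ← Finset.sum_mul]; ring
    _ ≤ G * ((Real.sqrt 3 * Real.sqrt (∑ i, u i ^ 2)) *
        (Real.sqrt 3 * Real.sqrt (∑ i, w i ^ 2))) := by
        gcongr
        · exact hsum u
        · exact hsum w
    _ = _ := by
        have : Real.sqrt 3 * Real.sqrt 3 = 3 := Real.mul_self_sqrt (by norm_num)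
        linear_combination G * (Real.sqrt (∑ i, u i ^ 2) * Real.sqrt (∑ i, w i ^ 2)) * this

/-- For `s > 1/2` there is `C = C(s) > 0` such that for every
bounded open `Ω ⊆ ℝ²`, setting `D = Ω × (-π, π)`, all smooth divergence-free
vector fields `u, v, w` that are `2π`-periodic with mean zero in `x₃` and vanish
on (outside of) the lateral boundary satisfy
`|∫_D (u·∇)v · w| ≤ C ‖u‖₂^{1/2} ‖∇u‖₂^{1/2} ‖∇v‖₂^{1-1/(2s)} ‖∂₃^s ∇v‖₂^{1/(2s)}
‖w‖₂^{1/2} ‖∇w‖₂^{1/2}`, where `∂₃^s ∇v` is characterized through the vertical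
Fourier coefficients. -/
theorem statement5 (s : ℝ) (hs : 1 / 2 < s) :
    ∃ C : ℝ, 0 < C ∧
      ∀ (Ω : Set (ℝ × ℝ)), IsOpen Ω → Bornology.IsBounded Ω →
      ∀ (u v w : (ℝ × ℝ) × ℝ → Fin 3 → ℝ) (Dsv : (ℝ × ℝ) × ℝ → Fin 3 → Fin 3 → ℝ),
        -- smoothness
        ContDiff ℝ (⊤ : ℕ∞) u → ContDiff ℝ (⊤ : ℕ∞) v → ContDiff ℝ (⊤ : ℕ∞) w → Continuous Dsv →
        -- divergence free
        (∀ x, ∑ j : Fin 3, fderiv ℝ u x (dir3 j) j = 0) →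
        (∀ x, ∑ j : Fin 3, fderiv ℝ v x (dir3 j) j = 0) →
        (∀ x, ∑ j : Fin 3, fderiv ℝ w x (dir3 j) j = 0) →
        -- 2π-periodicity in the vertical variable
        (∀ p t, u (p, t + 2 * π) = u (p, t)) →
        (∀ p t, v (p, t + 2 * π) = v (p, t)) →
        (∀ p t, w (p, t + 2 * π) = w (p, t)) →
        -- mean zero in the vertical variable
        (∀ (p : ℝ × ℝ) (i : Fin 3), ∫ t in Ioo (-π) π, u (p, t) i = 0) →
        (∀ (p : ℝ × ℝ) (i : Fin 3), ∫ t in Ioo (-π) π, v (p, t) i = 0) →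
        (∀ (p : ℝ × ℝ) (i : Fin 3), ∫ t in Ioo (-π) π, w (p, t) i = 0) →
        -- vanishing on the lateral boundary
        (∀ (p : ℝ × ℝ) t, p ∉ Ω → u (p, t) = 0) →
        (∀ (p : ℝ × ℝ) t, p ∉ Ω → v (p, t) = 0) →
        (∀ (p : ℝ × ℝ) t, p ∉ Ω → w (p, t) = 0) →
        -- `Dsv = ∂₃^s ∇v`: each vertical Fourier coefficient of `Dsv · i j`
        -- is `|k|^s` times the corresponding coefficient of `∂_j v_i`
        (∀ (p : ℝ × ℝ) (i j : Fin 3) (k : ℤ),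
          (∫ t in Ioo (-π) π, (Dsv (p, t) i j : ℂ) * Complex.exp (-Complex.I * (k : ℂ) * (t : ℂ)))
            = (|(k : ℝ)| ^ s : ℝ) *
              ∫ t in Ioo (-π) π,
                ((fderiv ℝ v (p, t) (dir3 j) i : ℝ) : ℂ) *
                  Complex.exp (-Complex.I * (k : ℂ) * (t : ℂ))) →
        |∫ x in Ω ×ˢ Ioo (-π) π,
            ∑ i : Fin 3, (∑ j : Fin 3, u x j * fderiv ℝ v x (dir3 j) i) * w x i| ≤
          C * (∫ x in Ω ×ˢ Ioo (-π) π, ∑ i : Fin 3, (u x i) ^ 2) ^ ((1 : ℝ) / 4) *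
            (∫ x in Ω ×ˢ Ioo (-π) π,
                ∑ i : Fin 3, ∑ j : Fin 3, (fderiv ℝ u x (dir3 j) i) ^ 2) ^ ((1 : ℝ) / 4) *
            (∫ x in Ω ×ˢ Ioo (-π) π,
                ∑ i : Fin 3, ∑ j : Fin 3, (fderiv ℝ v x (dir3 j) i) ^ 2) ^
              ((1 / 2 : ℝ) * (1 - 1 / (2 * s))) *
            (∫ x in Ω ×ˢ Ioo (-π) π,
                ∑ i : Fin 3, ∑ j : Fin 3, (Dsv x i j) ^ 2) ^ (1 / (4 * s)) *
            (∫ x in Ω ×ˢ Ioo (-π) π, ∑ i : Fin 3, (w x i) ^ 2) ^ ((1 : ℝ) / 4) *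
            (∫ x in Ω ×ˢ Ioo (-π) π,
                ∑ i : Fin 3, ∑ j : Fin 3, (fderiv ℝ w x (dir3 j) i) ^ 2) ^ ((1 : ℝ) / 4) := by
  obtain ⟨K, hK, hAg⟩ := agmon s hs
  obtain ⟨L, hL, hLady⟩ := lady
  have hs0 : 0 < s := by linarith
  refine ⟨(3 * K) * L ^ (1 / 4 : ℝ) * L ^ (1 / 4 : ℝ), by positivity, ?_⟩
  intro Ω ho hb u v w Dsv hu hv hw hD _ _ _ _ hvper _ _ hvmean _ huz _ hwz hcoef
  set α : ℝ := (1 / 2 : ℝ) * (1 - 1 / (2 * s)) with hα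
  set β : ℝ := 1 / (4 * s) with hβ
  have hα0 : 0 ≤ α := by
    have : 1 / (2 * s) ≤ 1 := by rw [div_le_one (by positivity)]; linarith
    simp only [hα]; linarith
  have hβ0 : 0 ≤ β := by positivity
  have hαβ : α + β = 1 / 2 := by simp only [hα, hβ]; field_simp; ring
  set Pu : (ℝ × ℝ) × ℝ → ℝ := fun x => ∑ i : Fin 3, (u x i) ^ 2 with hPu
  set Pw : (ℝ × ℝ) × ℝ → ℝ := fun x => ∑ i : Fin 3, (w x i) ^ 2 with hPw
  set Qu : (ℝ × ℝ) × ℝ → ℝ :=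
    fun x => ∑ i : Fin 3, ∑ j : Fin 3, (fderiv ℝ u x (dir3 j) i) ^ 2 with hQu
  set Qv : (ℝ × ℝ) × ℝ → ℝ :=
    fun x => ∑ i : Fin 3, ∑ j : Fin 3, (fderiv ℝ v x (dir3 j) i) ^ 2 with hQv
  set Qw : (ℝ × ℝ) × ℝ → ℝ :=
    fun x => ∑ i : Fin 3, ∑ j : Fin 3, (fderiv ℝ w x (dir3 j) i) ^ 2 with hQw
  set R : (ℝ × ℝ) × ℝ → ℝ := fun x => ∑ i : Fin 3, ∑ j : Fin 3, (Dsv x i j) ^ 2 with hR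
  set f : (ℝ × ℝ) × ℝ → ℝ :=
    fun x => ∑ i : Fin 3, (∑ j : Fin 3, u x j * fderiv ℝ v x (dir3 j) i) * w x i with hf
  have cP : ∀ u : (ℝ × ℝ) × ℝ → Fin 3 → ℝ, ContDiff ℝ (⊤ : ℕ∞) u →
      Continuous (fun x => ∑ i : Fin 3, (u x i) ^ 2) := fun u hu => by
    have := hu.continuous
    fun_prop
  have cQ : ∀ u : (ℝ × ℝ) × ℝ → Fin 3 → ℝ, ContDiff ℝ (⊤ : ℕ∞) u →
      Continuous (fun x => ∑ i : Fin 3, ∑ j : Fin 3, (fderiv ℝ u x (dir3 j) i) ^ 2) :=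
    fun u hu => continuous_finsetSum _ (fun i _ => continuous_finsetSum _ (fun j _ =>
      (cont_dir u hu i j).pow 2))
  have cPu : Continuous Pu := cP u hu
  have cPw : Continuous Pw := cP w hw
  have cQu : Continuous Qu := cQ u hu
  have cQv : Continuous Qv := cQ v hv
  have cQw : Continuous Qw := cQ w hw
  have cDij : ∀ i j, Continuous (fun x => Dsv x i j) := fun i j =>
    (continuous_apply j).comp ((continuous_apply i).comp hD)
  have cR : Continuous R := continuous_finsetSum _ (fun i _ => continuous_finsetSum _
    (fun j _ => (cDij i j).pow 2))
  have cui : ∀ i, Continuous (fun x => u x i) := fun i => (continuous_apply i).comp hu.continuous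
  have cwi : ∀ i, Continuous (fun x => w x i) := fun i => (continuous_apply i).comp hw.continuous
  have cf : Continuous f := continuous_finsetSum _ (fun i _ => (continuous_finsetSum _
    (fun j _ => (cui j).mul (cont_dir v hv i j))).mul (cwi i))
  have pPu : ∀ x, 0 ≤ Pu x := fun x => by simp only [hPu]; positivity
  have pPw : ∀ x, 0 ≤ Pw x := fun x => by simp only [hPw]; positivity
  have pQu : ∀ x, 0 ≤ Qu x := fun x => by simp only [hQu]; positivity
  have pQv : ∀ x, 0 ≤ Qv x := fun x => by simp only [hQv]; positivity
  have pQw : ∀ x, 0 ≤ Qw x := fun x => by simp only [hQw]; positivity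
  have pR : ∀ x, 0 ≤ R x := fun x => by simp only [hR]; positivity
  have mono : ∀ (a b : (ℝ × ℝ) × ℝ → ℝ), Continuous a → Continuous b → (∀ x, a x ≤ b x) →
      ∀ p : ℝ × ℝ, ∫ t in Ioo (-π) π, a (p, t) ≤ ∫ t in Ioo (-π) π, b (p, t) := by
    intro a b ha hb hab p
    have hp : Continuous (fun t : ℝ => (p, t)) := by fun_prop
    refine setIntegral_mono ?_ ?_ (fun t => hab _)
    · exact ((ha.comp hp).continuousOn.integrableOn_Icc (a := -π) (b := π)).mono_set
        Ioo_subset_Icc_self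
    · exact ((hb.comp hp).continuousOn.integrableOn_Icc (a := -π) (b := π)).mono_set
        Ioo_subset_Icc_self
  -- pointwise bound of the gradient
  have hgrad : ∀ p, ∀ t ∈ Ioo (-π) π, ∀ i j, |fderiv ℝ v (p, t) (dir3 j) i| ≤
      K * (∫ t in Ioo (-π) π, Qv (p, t)) ^ α * (∫ t in Ioo (-π) π, R (p, t)) ^ β := by
    intro p t ht i j
    have hp : Continuous (fun t : ℝ => (p, t)) := by fun_prop
    have h1 := hAg (fun t => fderiv ℝ v (p, t) (dir3 j) i) (fun t => Dsv (p, t) i j)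
      ((cont_dir v hv i j).comp hp) ((cDij i j).comp hp)
      (fun t => by simp only [per_deriv v hvper])
      (mean_deriv v hv hvper hvmean p i j) (fun k => hcoef p i j k) t ht
    refine h1.trans ?_
    have i1 : ∫ t in Ioo (-π) π, (fderiv ℝ v (p, t) (dir3 j) i) ^ 2 ≤
        ∫ t in Ioo (-π) π, Qv (p, t) := by
      refine mono (fun x => (fderiv ℝ v x (dir3 j) i) ^ 2) Qv ((cont_dir v hv i j).pow 2) cQv
        (fun x => ?_) p
      have a1 := Finset.single_le_sum (f := fun j => (fderiv ℝ v x (dir3 j) i) ^ 2)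
        (fun j _ => sq_nonneg _) (Finset.mem_univ j)
      have a2 := Finset.single_le_sum (f := fun i => ∑ j : Fin 3, (fderiv ℝ v x (dir3 j) i) ^ 2)
        (fun i _ => Finset.sum_nonneg fun j _ => sq_nonneg _) (Finset.mem_univ i)
      exact a1.trans a2
    have i2 : ∫ t in Ioo (-π) π, (Dsv (p, t) i j) ^ 2 ≤ ∫ t in Ioo (-π) π, R (p, t) := by
      refine mono (fun x => (Dsv x i j) ^ 2) R ((cDij i j).pow 2) cR (fun x => ?_) p
      have a1 := Finset.single_le_sum (f := fun j => (Dsv x i j) ^ 2)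
        (fun j _ => sq_nonneg _) (Finset.mem_univ j)
      have a2 := Finset.single_le_sum (f := fun i => ∑ j : Fin 3, (Dsv x i j) ^ 2)
        (fun i _ => Finset.sum_nonneg fun j _ => sq_nonneg _) (Finset.mem_univ i)
      exact a1.trans a2
    have j1 : 0 ≤ ∫ t in Ioo (-π) π, (fderiv ℝ v (p, t) (dir3 j) i) ^ 2 :=
      integral_nonneg fun t => sq_nonneg _
    have j2 : 0 ≤ ∫ t in Ioo (-π) π, (Dsv (p, t) i j) ^ 2 :=
      integral_nonneg fun t => sq_nonneg _
    have l1 := Real.rpow_le_rpow j1 i1 hα0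
    have l2 := Real.rpow_le_rpow j2 i2 hβ0
    have l3 := Real.rpow_nonneg j2 β
    have l4 := Real.rpow_nonneg (j1.trans i1) α
    exact mul_le_mul (mul_le_mul_of_nonneg_left l1 hK.le) l2 l3 (by positivity)
  have hH := holder_abs (volume.restrict Ω) (volume.restrict (Ioo (-π) π))
    (fun x => ENNReal.ofReal (Pu x)) (fun x => ENNReal.ofReal (Pw x))
    (fun x => ENNReal.ofReal (Qv x)) (fun x => ENNReal.ofReal (R x)) (fun x => ‖f x‖ₑ)
    cPu.measurable.ennreal_ofReal cPw.measurable.ennreal_ofReal cQv.measurable.ennreal_ofReal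
    cR.measurable.ennreal_ofReal cf.measurable.enorm (ENNReal.ofReal (3 * K)) α β hα0 hβ0 hαβ
    (by
      intro p
      filter_upwards [ae_restrict_mem measurableSet_Ioo] with t ht
      have hp : Continuous (fun t : ℝ => (p, t)) := by fun_prop
      rw [lint_line (fun t => Qv (p, t)) (cQv.comp hp) (fun t => pQv _),
        lint_line (fun t => R (p, t)) (cR.comp hp) (fun t => pR _)]
      have g1 : 0 ≤ ∫ t in Ioo (-π) π, Qv (p, t) := integral_nonneg fun t => pQv _
      have g2 : 0 ≤ ∫ t in Ioo (-π) π, R (p, t) := integral_nonneg fun t => pR _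
      rw [ENNReal.ofReal_rpow_of_nonneg g1 hα0, ENNReal.ofReal_rpow_of_nonneg g2 hβ0,
        ENNReal.ofReal_rpow_of_nonneg (pPu _) (by norm_num),
        ENNReal.ofReal_rpow_of_nonneg (pPw _) (by norm_num),
        ← ENNReal.ofReal_mul (by positivity), ← ENNReal.ofReal_mul (by positivity),
        ← ENNReal.ofReal_mul (Real.rpow_nonneg (pPu _) _),
        ← ENNReal.ofReal_mul (by positivity), ← ofReal_norm, Real.norm_eq_abs]
      apply ENNReal.ofReal_le_ofReal
      have := trilinear_bound (u (p, t)) (w (p, t)) (fun i j => fderiv ℝ v (p, t) (dir3 j) i) _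
        (hgrad p t ht)
      rw [Real.sqrt_eq_rpow, Real.sqrt_eq_rpow] at this
      refine this.trans (le_of_eq ?_)
      simp only [hPu, hPw]
      ring)
  rw [Measure.prod_restrict, ← Measure.volume_eq_prod, lint_box Ω hb Qv cQv pQv,
    lint_box Ω hb R cR pR] at hH
  have hLu := hLady Ω ho hb u hu huz
  have hLw := hLady Ω ho hb w hw hwz
  rw [lint_box Ω hb _ cPu pPu, lint_box Ω hb _ cQu pQu] at hLu
  rw [lint_box Ω hb _ cPw pPw, lint_box Ω hb _ cQw pQw] at hLw
  have nn : ∀ a : (ℝ × ℝ) × ℝ → ℝ, (∀ x, 0 ≤ a x) → 0 ≤ ∫ x in Ω ×ˢ Ioo (-π) π, a x :=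
    fun a ha => integral_nonneg fun x => ha x
  have nPu := nn Pu pPu
  have nPw := nn Pw pPw
  have nQu := nn Qu pQu
  have nQv := nn Qv pQv
  have nQw := nn Qw pQw
  have nR := nn R pR
  rw [← ENNReal.ofReal_mul nPu, ← ENNReal.ofReal_mul hL.le] at hLu
  rw [← ENNReal.ofReal_mul nPw, ← ENNReal.ofReal_mul hL.le] at hLw
  have hLu' := ENNReal.rpow_le_rpow hLu (by norm_num : (0:ℝ) ≤ 1 / 4)
  have hLw' := ENNReal.rpow_le_rpow hLw (by norm_num : (0:ℝ) ≤ 1 / 4)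
  rw [ENNReal.ofReal_rpow_of_nonneg (by positivity) (by norm_num)] at hLu' hLw'
  rw [ENNReal.ofReal_rpow_of_nonneg nQv hα0, ENNReal.ofReal_rpow_of_nonneg nR hβ0,
    ← ENNReal.ofReal_mul (by positivity), ← ENNReal.ofReal_mul (by positivity)] at hH
  have hfin := ((enorm_integral_le_lintegral_enorm f).trans hH).trans
    (mul_le_mul' (mul_le_mul' le_rfl hLu') hLw')
  rw [← ENNReal.ofReal_mul (by positivity), ← ENNReal.ofReal_mul (by positivity),
    ← ofReal_norm, ENNReal.ofReal_le_ofReal_iff (by positivity), Real.norm_eq_abs] at hfin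
  refine hfin.trans (le_of_eq ?_)
  rw [Real.mul_rpow hL.le (by positivity), Real.mul_rpow hL.le (by positivity),
    Real.mul_rpow nPu nQu, Real.mul_rpow nPw nQw]
  ring
end

section
/- Let s > 1/2 and let Ω ⊂ ℝ² be a bounded open set, D = Ω × (-π, π). There exists a constant C = C(s) > 0 such that for all smooth divergence-free vector fields u, v, w : D → ℝ³ that are 2π-periodic with mean zero in x₃ and vanish on the lateral boundary ∂Ω × (-π, π), one has |∫_D (u·∇)v · w dx| ≤ C ‖u‖_{L²(D)}^{1/2} ‖∇u‖_{L²(D)}^{1/2} ‖v‖_{L²(D)}^{1/2} ‖∇v‖_{L²(D)}^{1/2} ‖∇w‖_{L²(D)}^{1 - 1/(2s)} ‖∂₃^s ∇w‖_{L²(D)}^{1/(2s)}. -/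
open MeasureTheory Set
open scoped Real

lemma aux_nat_sum (s : ℝ) (hs : 1 / 2 < s) (m : ℝ) (hm : 0 < m) (n : ℕ) :
    ∑ i ∈ Finset.range n, 1 / (m ^ (2 * s) + ((i : ℝ) + 1) ^ (2 * s)) ≤
      (1 + 1 / (2 * s - 1)) * m ^ (1 - 2 * s) := by
  set g : ℝ → ℝ := fun x => 1 / (m ^ (2 * s) + x ^ (2 * s)) with hg
  have hmp : 0 < m ^ (2 * s) := Real.rpow_pos_of_pos hm _
  have hanti : AntitoneOn g (Ici 0) := by
    intro x hx y hy hxy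
    simp only [hg]
    have hx' : (0:ℝ) ≤ x := hx
    gcongr
  have hcont : ContinuousOn g (Ici 0) := by
    intro x hx
    have hx' : (0:ℝ) ≤ x := hx
    have : m ^ (2 * s) + x ^ (2 * s) ≠ 0 := by positivity
    apply ContinuousAt.continuousWithinAt
    refine ContinuousAt.div continuousAt_const ?_ this
    exact continuousAt_const.add (Real.continuousAt_rpow_const _ _ (Or.inr (by linarith)))
  have h1 := AntitoneOn.sum_le_integral (f := g) (x₀ := 0) (a := n)
    (hanti.mono (fun x hx => hx.1))
  simp only [zero_add] at h1
  have hint1 : IntegrableOn g (Ioc 0 m) :=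
    ((hcont.mono Icc_subset_Ici_self).integrableOn_Icc).mono_set Ioc_subset_Icc_self
  have hr : IntegrableOn (fun x : ℝ => x ^ (-(2 * s))) (Ioi m) :=
    integrableOn_Ioi_rpow_of_lt (by linarith) hm
  have hb2 : ∀ x ∈ Ioi m, g x ≤ x ^ (-(2 * s)) := by
    intro x hx
    have hx0 : 0 < x := hm.trans hx
    rw [Real.rpow_neg hx0.le, ← one_div]
    simp only [hg]
    have : 0 < x ^ (2 * s) := Real.rpow_pos_of_pos hx0 _
    apply one_div_le_one_div_of_le this; linarith
  have hgnn : ∀ x, 0 ≤ x → 0 ≤ g x := by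
    intro x hx; simp only [hg]; positivity
  have hint2 : IntegrableOn g (Ioi m) := by
    refine Integrable.mono' hr ?_ ?_
    · exact (hcont.mono (fun x hx => (hm.trans hx).le)).aestronglyMeasurable measurableSet_Ioi
    · refine (ae_restrict_iff' measurableSet_Ioi).2 (ae_of_all _ fun x hx => ?_)
      rw [Real.norm_of_nonneg (hgnn x (hm.trans hx).le)]; exact hb2 x hx
  have hU : Ioc 0 m ∪ Ioi m = Ioi 0 := Ioc_union_Ioi_eq_Ioi hm.le
  have hint : IntegrableOn g (Ioi 0) := hU ▸ hint1.union hint2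
  have h2 : ∫ x in (0:ℝ)..n, g x ≤ ∫ x in Ioi 0, g x := by
    rw [intervalIntegral.integral_of_le (by positivity)]
    refine setIntegral_mono_set hint ?_ (Ioc_subset_Ioi_self.eventuallyLE)
    exact (ae_restrict_iff' measurableSet_Ioi).2 (ae_of_all _ fun x hx => hgnn x (le_of_lt hx))
  have h3 : ∫ x in Ioi 0, g x = (∫ x in Ioc 0 m, g x) + ∫ x in Ioi m, g x := by
    rw [← hU, setIntegral_union (Ioc_disjoint_Ioi le_rfl) measurableSet_Ioi hint1 hint2]
  have h4 : ∫ x in Ioc 0 m, g x ≤ m ^ (1 - 2 * s) := by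
    have : ∫ x in Ioc 0 m, g x ≤ ∫ x in Ioc 0 m, m ^ (-(2 * s)) := by
      refine setIntegral_mono_on hint1 (by simp) measurableSet_Ioc fun x hx => ?_
      rw [Real.rpow_neg hm.le, ← one_div]
      simp only [hg]
      have : 0 < x ^ (2 * s) := Real.rpow_pos_of_pos hx.1 _
      apply one_div_le_one_div_of_le hmp; linarith
    refine this.trans (le_of_eq ?_)
    simp [hm.le]
    rw [sub_eq_add_neg, Real.rpow_add hm, Real.rpow_one]
  have h5 : ∫ x in Ioi m, g x ≤ 1 / (2 * s - 1) * m ^ (1 - 2 * s) := by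
    refine (setIntegral_mono_on hint2 hr measurableSet_Ioi hb2).trans (le_of_eq ?_)
    rw [integral_Ioi_rpow_of_lt (by linarith) hm]
    rw [show -(2 * s) + 1 = 1 - 2 * s by ring, show 1 - 2 * s = -(2 * s - 1) by ring]
    field_simp
  have h6 : ∑ i ∈ Finset.range n, 1 / (m ^ (2 * s) + ((i : ℝ) + 1) ^ (2 * s)) ≤
     ∫ x in (0:ℝ)..n, g x := by
    refine le_trans (le_of_eq ?_) h1
    simp [hg]
  linarith

lemma aux_int_sum (s : ℝ) (hs : 1 / 2 < s) (m : ℝ) (hm : 0 < m) (S : Finset ℤ) (hS : (0:ℤ) ∉ S) :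
    ∑ k ∈ S, 1 / (m ^ (2 * s) + |(k : ℝ)| ^ (2 * s)) ≤
      2 * ((1 + 1 / (2 * s - 1)) * m ^ (1 - 2 * s)) := by
  classical
  set g : ℤ → ℝ := fun k => 1 / (m ^ (2 * s) + |(k : ℝ)| ^ (2 * s)) with hg
  have hgn : ∀ k, 0 ≤ g k := fun k => by simp only [hg]; positivity
  obtain ⟨n, hn⟩ : ∃ n : ℕ, ∀ k ∈ S, k.natAbs ≤ n := by
    exact ⟨S.sup Int.natAbs, fun k hk => Finset.le_sup (f := Int.natAbs) hk⟩
  have hsub : S ⊆ (Finset.range n).image (fun i : ℕ => (i : ℤ) + 1) ∪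
      (Finset.range n).image (fun i : ℕ => -((i : ℤ) + 1)) := by
    intro k hk
    have h1 := hn k hk
    have h0 : k ≠ 0 := fun h => hS (h ▸ hk)
    simp only [Finset.mem_union, Finset.mem_image, Finset.mem_range]
    rcases lt_or_gt_of_ne h0 with h | h
    · right; exact ⟨k.natAbs - 1, by omega, by omega⟩
    · left; exact ⟨k.natAbs - 1, by omega, by omega⟩
  have key := aux_nat_sum s hs m hm n
  calc ∑ k ∈ S, g k ≤ _ := Finset.sum_le_sum_of_subset_of_nonneg hsub fun k _ _ => hgn k
    _ ≤ ∑ k ∈ (Finset.range n).image (fun i : ℕ => (i : ℤ) + 1), g k +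
        ∑ k ∈ (Finset.range n).image (fun i : ℕ => -((i : ℤ) + 1)), g k := by
        rw [← Finset.sum_union_inter]
        have : 0 ≤ ∑ k ∈ (Finset.range n).image (fun i : ℕ => (i : ℤ) + 1) ∩
          (Finset.range n).image (fun i : ℕ => -((i : ℤ) + 1)), g k :=
          Finset.sum_nonneg fun k _ => hgn k
        linarith
    _ = _ := by
        rw [Finset.sum_image (by intro a _ b _ h; simpa using h),
          Finset.sum_image (by intro a _ b _ h; simpa using h)]
    _ ≤ _ := by
        rw [two_mul]
        have e : ∀ i : ℕ, |(i : ℝ) + 1| = i + 1 := fun i => abs_of_nonneg (by positivity)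
        have e2 : ∀ i : ℕ, |-(1:ℝ) + -(i:ℝ)| = i + 1 := fun i => by
          rw [← neg_add, abs_neg, add_comm]; exact e i
        refine add_le_add (le_trans (le_of_eq ?_) key) (le_trans (le_of_eq ?_) key)
        · simp [hg, e]
        · simp [hg, e2]

lemma aux_seq_s6 (s : ℝ) (hs : 1 / 2 < s) (c : ℤ → ℝ) (hc : ∀ k, 0 ≤ c k) (hc0 : c 0 = 0)
    (a b : ℝ) (ha : ∀ S : Finset ℤ, ∑ k ∈ S, c k ^ 2 ≤ a)
    (hb : ∀ S : Finset ℤ, ∑ k ∈ S, |(k:ℝ)| ^ (2 * s) * c k ^ 2 ≤ b) (S : Finset ℤ) :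
    (∑ k ∈ S, c k) ^ 2 ≤ (4 * (1 + 1 / (2 * s - 1))) * (a ^ (1 - 1 / (2 * s)) * b ^ (1 / (2 * s))) := by
  classical
  have ha0 : 0 ≤ a := by simpa using ha ∅
  have hb0 : 0 ≤ b := by simpa using hb ∅
  have h2s : 0 < 2 * s - 1 := by linarith
  have htriv : (∀ k, c k = 0) → (∑ k ∈ S, c k) ^ 2 ≤ (4 * (1 + 1 / (2 * s - 1))) * (a ^ (1 - 1 / (2 * s)) * b ^ (1 / (2 * s))) := by
    intro h
    rw [Finset.sum_eq_zero fun k _ => h k, zero_pow two_ne_zero]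
    positivity
  rcases ha0.eq_or_lt with h | hap
  · apply htriv
    intro k
    have := ha {k}
    simp only [Finset.sum_singleton] at this
    nlinarith [sq_nonneg (c k)]
  rcases hb0.eq_or_lt with h | hbp
  · apply htriv
    intro k
    by_cases hk : k = 0
    · rw [hk, hc0]
    have := hb {k}
    simp only [Finset.sum_singleton] at this
    have hk' : 0 < |(k:ℝ)| ^ (2 * s) := Real.rpow_pos_of_pos (by positivity) _
    have h3 : c k ^ 2 ≤ 0 := by
      by_contra hcon
      push Not at hcon
      have := mul_pos hk' hcon
      linarith
    nlinarith [sq_nonneg (c k)]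
  set m := (b / a) ^ (1 / (2 * s)) with hm
  have hmp : 0 < m := Real.rpow_pos_of_pos (by positivity) _
  have hm2 : m ^ (2 * s) = b / a := by
    rw [hm, ← Real.rpow_mul (by positivity), one_div_mul_cancel (by linarith), Real.rpow_one]
  have hfin : b * m ^ (1 - 2 * s) = a ^ (1 - 1 / (2 * s)) * b ^ (1 / (2 * s)) := by
    rw [hm, ← Real.rpow_mul (by positivity), Real.div_rpow hbp.le hap.le]
    have e : 1 / (2 * s) * (1 - 2 * s) = 1 / (2 * s) - 1 := by field_simp
    rw [e, Real.rpow_sub hbp, Real.rpow_one, show (1 - 1 / (2 * s)) = -(1 / (2 * s) - 1) by ring,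
      Real.rpow_neg hap.le]
    field_simp
  set S' := S.erase 0 with hS'
  have hSS : ∑ k ∈ S, c k = ∑ k ∈ S', c k := by
    rw [hS']; symm; exact Finset.sum_erase _ hc0
  have hw : ∀ k : ℤ, 0 < m ^ (2 * s) + |(k:ℝ)| ^ (2 * s) := fun k => by positivity
  have cs := Finset.sum_sq_le_sum_mul_sum_of_sq_le_mul S'
    (r := c) (f := fun k => 1 / (m ^ (2 * s) + |(k:ℝ)| ^ (2 * s)))
    (g := fun k => (m ^ (2 * s) + |(k:ℝ)| ^ (2 * s)) * c k ^ 2)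
    (fun k _ => by have := hw k; positivity) (fun k _ => by have := hw k; positivity)
    (fun k _ => by have := hw k; apply le_of_eq; field_simp)
  have h1 := aux_int_sum s hs m hmp S' (by simp [hS'])
  have h2 : ∑ k ∈ S', (m ^ (2 * s) + |(k:ℝ)| ^ (2 * s)) * c k ^ 2 ≤ 2 * b := by
    simp only [add_mul, Finset.sum_add_distrib, ← Finset.mul_sum]
    have e1 := ha S'
    have e2 := hb S'
    have : m ^ (2 * s) * ∑ k ∈ S', c k ^ 2 ≤ b := by
      calc _ ≤ m ^ (2 * s) * a := by gcongr
        _ = b := by rw [hm2]; field_simp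
    linarith
  rw [hSS]
  calc _ ≤ _ := cs
    _ ≤ (2 * ((1 + 1 / (2 * s - 1)) * m ^ (1 - 2 * s))) * (2 * b) := by
      refine mul_le_mul h1 h2 ?_ (by positivity)
      exact Finset.sum_nonneg fun k _ => by have := hw k; positivity
    _ = (4 * (1 + 1 / (2 * s - 1))) * (b * m ^ (1 - 2 * s)) := by ring
    _ = _ := by rw [hfin]

lemma aux_agmon (s : ℝ) (hs : 1 / 2 < s) (f F : ℝ → ℝ) (hf : Continuous f) (hF : Continuous F)
    (hper : ∀ t, f (t + 2 * π) = f t) (hmean : ∫ t in Ioo (-π) π, f t = 0)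
    (hfF : ∀ k : ℤ, (∫ t in Ioo (-π) π, (F t : ℂ) * Complex.exp (-Complex.I * (k : ℂ) * (t : ℂ)))
            = (|(k : ℝ)| ^ s : ℝ) *
              ∫ t in Ioo (-π) π, (f t : ℂ) * Complex.exp (-Complex.I * (k : ℂ) * (t : ℂ))) (t : ℝ) :
    f t ^ 2 ≤ (4 * (1 + 1 / (2 * s - 1))) * ((∫ t in Ioo (-π) π, f t ^ 2) ^ (1 - 1 / (2 * s)) *
      (∫ t in Ioo (-π) π, F t ^ 2) ^ (1 / (2 * s))) := by
  have hpi := Real.pi_pos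
  have h2s : 0 < 2 * s - 1 := by linarith
  have hab : -π < -π + 2 * π := by linarith
  have : Fact (0 < 2 * π) := ⟨by linarith⟩
  set fc : ℝ → ℂ := fun t => (f t : ℂ) with hfc
  set Fc : ℝ → ℂ := fun t => (F t : ℂ) with hFc
  have hcoef : ∀ (g : ℝ → ℂ) (k : ℤ), fourierCoeffOn hab g k = (1 / (2 * π) : ℝ) *
      ∫ t in Ioo (-π) π, g t * Complex.exp (-Complex.I * (k : ℂ) * (t : ℂ)) := by
    intro g k
    rw [fourierCoeffOn_eq_integral, intervalIntegral.integral_of_le hab.le,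
      integral_Ioc_eq_integral_Ioo, show -π + 2 * π = π by ring, show π - -π = 2 * π by ring,
      Complex.real_smul]
    congr 1
    refine setIntegral_congr_fun measurableSet_Ioo fun x _ => ?_
    simp only [fourier_coe_apply, smul_eq_mul]
    rw [mul_comm]
    congr 2
    push_cast
    field_simp
  have hrel : ∀ k : ℤ, ‖fourierCoeffOn hab Fc k‖ = |(k:ℝ)| ^ s * ‖fourierCoeffOn hab fc k‖ := by
    intro k
    rw [hcoef, hcoef, hfF k, norm_mul, norm_mul, norm_mul, Complex.norm_real (|(k : ℝ)| ^ s),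
      Real.norm_of_nonneg (by positivity)]
    ring
  have hpars : ∀ g : ℝ → ℝ, Continuous g →
      HasSum (fun i => ‖fourierCoeffOn hab (fun t => (g t : ℂ)) i‖ ^ 2) ((2 * π)⁻¹ * ∫ t in Ioo (-π) π, g t ^ 2) := by
    intro g hg
    have hL : MemLp (fun t => (g t : ℂ)) 2 (volume.restrict (Ioc (-π) (-π + 2 * π))) := by
      have hc : Continuous (fun t => (g t : ℂ)) := by fun_prop
      obtain ⟨C, hC⟩ := (isCompact_Icc (a := -π) (b := -π + 2 * π)).exists_bound_of_continuousOn hc.continuousOn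
      refine MemLp.of_bound hc.aestronglyMeasurable C ?_
      exact (ae_restrict_iff' measurableSet_Ioc).2 (ae_of_all _ fun x hx => hC x (Ioc_subset_Icc_self hx))
    have := hasSum_sq_fourierCoeffOn hab hL
    have e : (-π + 2 * π - -π)⁻¹ • ∫ x in (-π)..(-π + 2 * π), ‖((g x : ℝ) : ℂ)‖ ^ 2 =
        (2 * π)⁻¹ * ∫ t in Ioo (-π) π, g t ^ 2 := by
      rw [intervalIntegral.integral_of_le hab.le,
        integral_Ioc_eq_integral_Ioo, show -π + 2 * π = π by ring, show π - -π = 2 * π by ring]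
      simp
    rw [e] at this
    exact this
  have hpf := hpars f hf
  have hpF := hpars F hF
  set a := ∫ t in Ioo (-π) π, f t ^ 2 with hadef
  set b := ∫ t in Ioo (-π) π, F t ^ 2 with hbdef
  have ha0 : 0 ≤ a := integral_nonneg fun _ => sq_nonneg _
  have hb0 : 0 ≤ b := integral_nonneg fun _ => sq_nonneg _
  have hle : (2 * π)⁻¹ ≤ 1 := by
    apply inv_le_one_of_one_le₀; linarith [Real.pi_gt_three]
  set M := (4 * (1 + 1 / (2 * s - 1))) * (a ^ (1 - 1 / (2 * s)) * b ^ (1 / (2 * s))) with hM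
  have hM0 : 0 ≤ M := by positivity
  have hS : ∀ S : Finset ℤ, (∑ k ∈ S, ‖fourierCoeffOn hab fc k‖) ^ 2 ≤ M := by
    refine aux_seq_s6 s hs _ (fun k => norm_nonneg _) ?_ a b ?_ ?_
    · rw [hcoef]
      simp only [hfc]
      simp
      rw [integral_complex_ofReal]
      exact_mod_cast hmean
    · intro S
      calc _ ≤ (2 * π)⁻¹ * a := sum_le_hasSum S (fun _ _ => sq_nonneg _) hpf
        _ ≤ 1 * a := by gcongr
        _ = a := one_mul a
    · intro S
      calc _ = ∑ k ∈ S, ‖fourierCoeffOn hab Fc k‖ ^ 2 := by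
            refine Finset.sum_congr rfl fun k _ => ?_
            rw [hrel, mul_pow, ← Real.rpow_natCast (|(k:ℝ)| ^ s), ← Real.rpow_mul (by positivity)]
            congr 2; push_cast; ring
        _ ≤ (2 * π)⁻¹ * b := sum_le_hasSum S (fun _ _ => sq_nonneg _) hpF
        _ ≤ 1 * b := by gcongr
        _ = b := one_mul b
  have hS' : ∀ S : Finset ℤ, ∑ k ∈ S, ‖fourierCoeffOn hab fc k‖ ≤ Real.sqrt M := fun S =>
    Real.le_sqrt_of_sq_le (hS S)
  have hsumm : Summable (fun k => ‖fourierCoeffOn hab fc k‖) :=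
    summable_of_sum_le (fun _ => norm_nonneg _) hS'
  have hper' : Function.Periodic fc (2 * π) := fun t => by simp [hfc, hper]
  let G : C(AddCircle (2 * π), ℂ) := ⟨hper'.lift, by
    refine continuous_coinduced_dom.mpr ?_
    change Continuous fc
    fun_prop⟩
  have hG : ∀ t : ℝ, G (t : AddCircle (2 * π)) = fc t := fun t => hper'.lift_coe t
  have hGc : ∀ k, fourierCoeff G k = fourierCoeffOn hab fc k := by
    intro k
    rw [fourierCoeff_eq_intervalIntegral _ _ (-π), fourierCoeffOn_eq_integral]
    rw [show -π + 2 * π - -π = 2 * π by ring]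
    simp only [hG]
  have hsumG : Summable (fourierCoeff G) := by
    refine Summable.of_norm ?_
    simpa only [hGc] using hsumm
  have hpt := has_pointwise_sum_fourier_series_of_summable hsumG (t : AddCircle (2 * π))
  rw [hG] at hpt
  have hbound : ‖fc t‖ ≤ Real.sqrt M := by
    rw [← hpt.tsum_eq]
    have hn : ∀ k, ‖fourierCoeff G k • (fourier k (t : AddCircle (2 * π)) : ℂ)‖ = ‖fourierCoeffOn hab fc k‖ := by
      intro k
      rw [norm_smul, hGc, fourier_apply, Circle.norm_coe, mul_one]
    refine (norm_tsum_le_tsum_norm (by simpa only [hn] using hsumm)).trans ?_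
    simp only [hn]
    exact hsumm.tsum_le_of_sum_le hS'
  have : ‖fc t‖ = |f t| := by simp [hfc]
  rw [this] at hbound
  rw [← sq_abs, ← Real.sq_sqrt hM0]
  gcongr

lemma aux_holder {α : Type*} [MeasurableSpace α] (μ : Measure α) {n : ℕ} (f : Fin n → α → ℝ)
    (hf : ∀ i, Integrable (f i) μ) (hf0 : ∀ i x, 0 ≤ f i x) (p : Fin n → ℝ)
    (hp : ∀ i, 0 ≤ p i) (hsum : ∑ i, p i = 1) :
    Integrable (fun x => ∏ i, f i x ^ p i) μ ∧
      ∫ x, ∏ i, f i x ^ p i ∂μ ≤ ∏ i, (∫ x, f i x ∂μ) ^ p i := by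
  have hmeas : AEStronglyMeasurable (fun x => ∏ i, f i x ^ p i) μ := by
    have : AEMeasurable (fun x => ∏ i, f i x ^ p i) μ :=
      Finset.aemeasurable_fun_prod _ fun i _ => (hf i).aemeasurable.pow_const _
    exact this.aestronglyMeasurable
  have h0 : ∀ x, 0 ≤ ∏ i, f i x ^ p i := fun x =>
    Finset.prod_nonneg fun i _ => Real.rpow_nonneg (hf0 i x) _
  have key := ENNReal.lintegral_prod_norm_pow_le (μ := μ) Finset.univ
    (f := fun i x => ENNReal.ofReal (f i x))
    (fun i _ => (hf i).aemeasurable.ennreal_ofReal) (p := p) hsum (fun i _ => hp i)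
  have e1 : ∀ x, ∏ i, ENNReal.ofReal (f i x) ^ p i = ENNReal.ofReal (∏ i, f i x ^ p i) := by
    intro x
    rw [ENNReal.ofReal_prod_of_nonneg (fun i _ => Real.rpow_nonneg (hf0 i x) _)]
    refine Finset.prod_congr rfl fun i _ => ?_
    rw [ENNReal.ofReal_rpow_of_nonneg (hf0 i x) (hp i)]
  have e2 : ∏ i, (∫⁻ x, ENNReal.ofReal (f i x) ∂μ) ^ p i =
      ENNReal.ofReal (∏ i, (∫ x, f i x ∂μ) ^ p i) := by
    have hi0 : ∀ i, 0 ≤ ∫ x, f i x ∂μ := fun i => integral_nonneg (hf0 i)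
    rw [ENNReal.ofReal_prod_of_nonneg (fun i _ => Real.rpow_nonneg (hi0 i) _)]
    refine Finset.prod_congr rfl fun i _ => ?_
    rw [← ofReal_integral_eq_lintegral_ofReal (hf i) (ae_of_all _ (hf0 i)),
      ENNReal.ofReal_rpow_of_nonneg (hi0 i) (hp i)]
  simp only [e1] at key
  rw [e2] at key
  have hint : Integrable (fun x => ∏ i, f i x ^ p i) μ := by
    refine ⟨hmeas, ?_⟩
    rw [hasFiniteIntegral_iff_ofReal (ae_of_all _ h0)]
    exact key.trans_lt ENNReal.ofReal_lt_top
  refine ⟨hint, ?_⟩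
  rw [← ofReal_integral_eq_lintegral_ofReal hint (ae_of_all _ h0)] at key
  refine (ENNReal.ofReal_le_ofReal_iff ?_).1 key
  exact Finset.prod_nonneg fun i _ => Real.rpow_nonneg (integral_nonneg (hf0 i)) _

lemma aux_cs {α : Type*} [MeasurableSpace α] (μ : Measure α) (f g : α → ℝ)
    (hf : Integrable f μ) (hg : Integrable g μ) (hf0 : ∀ x, 0 ≤ f x) (hg0 : ∀ x, 0 ≤ g x) :
    Integrable (fun x => √(f x) * √(g x)) μ ∧
    ∫ x, √(f x) * √(g x) ∂μ ≤ √(∫ x, f x ∂μ) * √(∫ x, g x ∂μ) := by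
  have := aux_holder μ ![f, g] (by intro i; fin_cases i <;> simpa)
    (by intro i; fin_cases i <;> simpa) ![1 / 2, 1 / 2] (by intro i; fin_cases i <;> simp)
    (by simp; norm_num)
  simpa [Fin.prod_univ_two, Real.sqrt_eq_rpow] using this

lemma aux_intOn (Ω : Set (ℝ × ℝ)) (hb : Bornology.IsBounded Ω)
    (F : (ℝ × ℝ) × ℝ → ℝ) (hF : Continuous F) : IntegrableOn F (Ω ×ˢ Ioo (-π) π) := by
  have hK : IsCompact (closure Ω ×ˢ Icc (-π) π) := hb.isCompact_closure.prod isCompact_Icc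
  exact (hF.continuousOn.integrableOn_compact hK).mono_set
    (prod_mono subset_closure Ioo_subset_Icc_self)

lemma aux_intOn2 (Ω : Set (ℝ × ℝ)) (hb : Bornology.IsBounded Ω)
    (F : ℝ × ℝ → ℝ) (hF : Continuous F) : IntegrableOn F Ω :=
  (hF.continuousOn.integrableOn_compact hb.isCompact_closure).mono_set subset_closure

lemma aux_intOn1 {E : Type*} [NormedAddCommGroup E] (F : ℝ → E) (hF : Continuous F) :
    IntegrableOn F (Ioo (-π) π) :=
  (hF.continuousOn.integrableOn_compact isCompact_Icc).mono_set Ioo_subset_Icc_self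

lemma aux_contP {E : Type*} [NormedAddCommGroup E] [NormedSpace ℝ E] (F : (ℝ × ℝ) × ℝ → E)
    (hF : Continuous F) : Continuous (fun p => ∫ t in Ioo (-π) π, F (p, t)) := by
  have := continuous_parametric_integral_of_continuous (μ := (volume : Measure ℝ))
    (f := fun p t => F (p, t)) hF (isCompact_Icc (a := -π) (b := π))
  simpa only [integral_Icc_eq_integral_Ioo] using this

lemma aux_fubini (Ω : Set (ℝ × ℝ)) (hb : Bornology.IsBounded Ω)
    (F : (ℝ × ℝ) × ℝ → ℝ) (hF : Continuous F) :
    ∫ x in Ω ×ˢ Ioo (-π) π, F x = ∫ p in Ω, ∫ t in Ioo (-π) π, F (p, t) := by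
  have := aux_intOn Ω hb F hF
  rw [Measure.volume_eq_prod] at this ⊢
  exact setIntegral_prod F this

lemma aux_hasFDeriv (h : (ℝ × ℝ) × ℝ → ℝ) (hh : ContDiff ℝ 1 h) (p : ℝ × ℝ) :
    HasFDerivAt (fun p => ∫ t in Ioo (-π) π, h (p, t))
      (∫ t in Ioo (-π) π, (fderiv ℝ h (p, t)).comp (ContinuousLinearMap.inl ℝ (ℝ × ℝ) ℝ)) p := by
  have hc := hh.continuous
  have hd : Continuous (fderiv ℝ h) := hh.continuous_fderiv (by simp)
  have hF' : Continuous (fun x : (ℝ × ℝ) × ℝ =>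
      (fderiv ℝ h x).comp (ContinuousLinearMap.inl ℝ (ℝ × ℝ) ℝ)) := by fun_prop
  obtain ⟨C, hC⟩ := ((isCompact_closedBall p 1).prod
    (isCompact_Icc (a := -π) (b := π))).exists_bound_of_continuousOn hF'.continuousOn
  refine hasFDerivAt_integral_of_dominated_of_fderiv_le (s := Metric.closedBall p 1)
    (F' := fun p t => (fderiv ℝ h (p, t)).comp (ContinuousLinearMap.inl ℝ (ℝ × ℝ) ℝ))
    (bound := fun _ => C)
    (Metric.closedBall_mem_nhds p one_pos) ?_ ?_ ?_ ?_ ?_ ?_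
  · exact Filter.Eventually.of_forall fun x =>
      (Continuous.aestronglyMeasurable (by fun_prop))
  · exact aux_intOn1 _ (by fun_prop)
  · exact Continuous.aestronglyMeasurable (by fun_prop)
  · refine (ae_restrict_iff' measurableSet_Ioo).2 (ae_of_all _ fun t ht x hx => ?_)
    exact hC (x, t) ⟨hx, Ioo_subset_Icc_self ht⟩
  · simp
  · refine ae_of_all _ fun t x _ => ?_
    have h1 : HasFDerivAt h (fderiv ℝ h (x, t)) (x, t) :=
      (hh.differentiable (by simp) (x, t)).hasFDerivAt
    exact h1.comp x (hasFDerivAt_prodMk_left x t)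

lemma aux_fderivP (h : (ℝ × ℝ) × ℝ → ℝ) (hh : ContDiff ℝ 1 h) (p q : ℝ × ℝ) :
    fderiv ℝ (fun p => ∫ t in Ioo (-π) π, h (p, t)) p q =
      ∫ t in Ioo (-π) π, fderiv ℝ h (p, t) (q, 0) := by
  rw [(aux_hasFDeriv h hh p).fderiv]
  have hd : Continuous (fderiv ℝ h) := hh.continuous_fderiv (by simp)
  have hint : Integrable (fun t => (fderiv ℝ h (p, t)).comp (ContinuousLinearMap.inl ℝ (ℝ × ℝ) ℝ))
      (volume.restrict (Ioo (-π) π)) := aux_intOn1 _ (by fun_prop)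
  rw [ContinuousLinearMap.integral_apply hint]
  simp

lemma aux_contDiffP (h : (ℝ × ℝ) × ℝ → ℝ) (hh : ContDiff ℝ 1 h) :
    ContDiff ℝ 1 (fun p => ∫ t in Ioo (-π) π, h (p, t)) := by
  rw [contDiff_one_iff_fderiv]
  refine ⟨fun p => (aux_hasFDeriv h hh p).differentiableAt, ?_⟩
  have : fderiv ℝ (fun p => ∫ t in Ioo (-π) π, h (p, t)) = fun p =>
      ∫ t in Ioo (-π) π, (fderiv ℝ h (p, t)).comp (ContinuousLinearMap.inl ℝ (ℝ × ℝ) ℝ) := by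
    ext1 p; exact (aux_hasFDeriv h hh p).fderiv
  rw [this]
  have hd : Continuous (fderiv ℝ h) := hh.continuous_fderiv (by simp)
  exact aux_contP (fun x => (fderiv ℝ h x).comp (ContinuousLinearMap.inl ℝ (ℝ × ℝ) ℝ))
    (by fun_prop)

lemma aux_compact (Ω : Set (ℝ × ℝ)) (hb : Bornology.IsBounded Ω) (P : ℝ × ℝ → ℝ)
    (hP : ∀ p, p ∉ Ω → P p = 0) : HasCompactSupport P :=
  HasCompactSupport.intro hb.isCompact_closure fun p hp => hP p fun h => hp (subset_closure h)

lemma aux_int_fderiv (P : ℝ × ℝ → ℝ) (hP : ContDiff ℝ 1 P) (hc : HasCompactSupport P)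
    (q : ℝ × ℝ) : ∫ p, fderiv ℝ P p q = 0 := by
  have hd : Continuous (fderiv ℝ P) := hP.continuous_fderiv (by simp)
  have h := integral_mul_fderiv_eq_neg_fderiv_mul_of_integrable (μ := (volume : Measure (ℝ × ℝ)))
    (f := P) (g := fun _ => (1:ℝ)) (v := q) ?_ ?_ ?_ ?_ ?_
  · simp at h; exact h
  · simp only [mul_one]
    refine Continuous.integrable_of_hasCompactSupport (by fun_prop) ?_
    exact hc.fderiv_apply ℝ q
  · simp
  · simp only [mul_one]
    exact hP.continuous.integrable_of_hasCompactSupport hc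
  · intro x _; exact hP.differentiable (by simp) x
  · intro x _; fun_prop

lemma aux_dir (j : Fin 3) : (j = 2 ∧ dir3 j = ((0, 0), 1)) ∨ ∃ q : ℝ × ℝ, dir3 j = (q, 0) ∧ ‖q‖ ≤ 1 := by
  fin_cases j
  · right; exact ⟨(1, 0), rfl, by simp⟩
  · right; exact ⟨(0, 1), rfl, by simp⟩
  · left; exact ⟨rfl, rfl⟩

lemma aux_vert (f : (ℝ × ℝ) × ℝ → ℝ) (hf : ContDiff ℝ 1 f) (hper : ∀ p t, f (p, t + 2 * π) = f (p, t))
    (p : ℝ × ℝ) : ∫ t in Ioo (-π) π, fderiv ℝ f (p, t) ((0, 0), 1) = 0 := by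
  have hd : Continuous (fderiv ℝ f) := hf.continuous_fderiv (by simp)
  have hpi := Real.pi_pos
  rw [← integral_Ioc_eq_integral_Ioo, ← intervalIntegral.integral_of_le (by linarith)]
  rw [intervalIntegral.integral_eq_sub_of_hasDerivAt (f := fun t => f (p, t))]
  · have := hper p (-π)
    rw [show -π + 2 * π = π by ring] at this
    rw [this, sub_self]
  · intro t _
    have h1 : HasFDerivAt f (fderiv ℝ f (p, t)) (p, t) :=
      (hf.differentiable (by simp) (p, t)).hasFDerivAt
    have h2 : HasDerivAt (fun t : ℝ => (p, t)) ((0, 0), 1) t :=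
      (hasDerivAt_const t p).prodMk (hasDerivAt_id t)
    exact h1.comp_hasDerivAt t h2
  · exact Continuous.intervalIntegrable (by fun_prop) _ _

lemma aux_ibp (Ω : Set (ℝ × ℝ)) (hb : Bornology.IsBounded Ω) (h : (ℝ × ℝ) × ℝ → ℝ)
    (hh : ContDiff ℝ 1 h) (h0 : ∀ p t, p ∉ Ω → h (p, t) = 0)
    (h0' : ∀ p t d, p ∉ Ω → fderiv ℝ h (p, t) d = 0)
    (hper : ∀ p t, h (p, t + 2 * π) = h (p, t)) (j : Fin 3) :
    ∫ x in Ω ×ˢ Ioo (-π) π, fderiv ℝ h x (dir3 j) = 0 := by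
  have hd : Continuous (fderiv ℝ h) := hh.continuous_fderiv (by simp)
  rw [aux_fubini Ω hb _ (by fun_prop)]
  rcases aux_dir j with ⟨_, hj⟩ | ⟨q, hj, _⟩
  · rw [hj]
    simp only [aux_vert h hh hper]
    simp
  · rw [hj]
    rw [setIntegral_eq_integral_of_forall_compl_eq_zero]
    · simp only [← aux_fderivP h hh]
      refine aux_int_fderiv _ (aux_contDiffP h hh) (aux_compact Ω hb _ fun p hp => ?_) q
      simp [h0 p _ hp]
    · intro p hp
      simp [h0' p _ _ hp]

lemma aux_mean (f : (ℝ × ℝ) × ℝ → ℝ) (hf : ContDiff ℝ 1 f) (hper : ∀ p t, f (p, t + 2 * π) = f (p, t))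
    (hmean : ∀ p, ∫ t in Ioo (-π) π, f (p, t) = 0) (p : ℝ × ℝ) (j : Fin 3) :
    ∫ t in Ioo (-π) π, fderiv ℝ f (p, t) (dir3 j) = 0 := by
  rcases aux_dir j with ⟨_, hj⟩ | ⟨q, hj, _⟩
  · rw [hj]; exact aux_vert f hf hper p
  · rw [hj, ← aux_fderivP f hf]
    simp [hmean]

lemma aux_lady : ∃ C : ℝ, 0 < C ∧ ∀ (Ω : Set (ℝ × ℝ)), IsOpen Ω → Bornology.IsBounded Ω →
    ∀ u : (ℝ × ℝ) × ℝ → Fin 3 → ℝ, ContDiff ℝ 1 u → (∀ p t, p ∉ Ω → u (p, t) = 0) →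
    ∫ p in Ω, (∫ t in Ioo (-π) π, ∑ i, u (p, t) i ^ 2) ^ 2 ≤
      C * ((∫ x in Ω ×ˢ Ioo (-π) π, ∑ i : Fin 3, (u x i) ^ 2) *
      ∫ x in Ω ×ˢ Ioo (-π) π, ∑ i : Fin 3, ∑ j : Fin 3, (fderiv ℝ u x (dir3 j) i) ^ 2) := by
  set Cs : NNReal := lintegralPowLePowLIntegralFDerivConst (volume : Measure (ℝ × ℝ)) 2 with hCs
  refine ⟨Cs * 144 + 1, by positivity, ?_⟩
  intro Ω hO hb u hu hu0
  have huc := hu.continuous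
  have hd : Continuous (fderiv ℝ u) := hu.continuous_fderiv (by simp)
  set E : (ℝ × ℝ) × ℝ → ℝ := fun x => ∑ i : Fin 3, (u x i) ^ 2 with hE
  set G : (ℝ × ℝ) × ℝ → ℝ := fun x => ∑ i : Fin 3, ∑ j : Fin 3, (fderiv ℝ u x (dir3 j) i) ^ 2 with hG
  have hEc : Continuous E := by fun_prop
  have hGc : Continuous G := by fun_prop
  have hE0 : ∀ x, 0 ≤ E x := fun x => by positivity
  have hG0 : ∀ x, 0 ≤ G x := fun x => by positivity
  have hui : ∀ i, ContDiff ℝ 1 (fun x => u x i) := fun i => contDiff_pi.1 hu i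
  have hEd : ContDiff ℝ 1 E := ContDiff.sum fun i _ => (hui i).pow 2
  have hfE : ∀ x d, fderiv ℝ E x d = ∑ i, 2 * u x i * fderiv ℝ u x d i := by
    intro x d
    have h1 : HasFDerivAt u (fderiv ℝ u x) x := (hu.differentiable (by simp) x).hasFDerivAt
    have h2 := fun i => (hasFDerivAt_pi'.1 h1 i).pow 2
    have h3 := HasFDerivAt.fun_sum (u := Finset.univ) fun i _ => h2 i
    rw [HasFDerivAt.fderiv h3]
    simp
  set U : ℝ × ℝ → ℝ := fun p => ∫ t in Ioo (-π) π, E (p, t) with hU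
  have hUd : ContDiff ℝ 1 U := aux_contDiffP E hEd
  have hE00 : ∀ p t, p ∉ Ω → E (p, t) = 0 := fun p t hp => by simp [hE, hu0 p t hp]
  have hUz : ∀ p, p ∉ Ω → U p = 0 := fun p hp => by simp [hU, hE00 p _ hp]
  set K : ℝ × ℝ → ℝ := fun p => ∫ t in Ioo (-π) π, √(E (p, t)) * √(G (p, t)) with hK
  have hEGc : Continuous (fun x => √(E x) * √(G x)) := by fun_prop
  have hKc : Continuous K := aux_contP (fun x => √(E x) * √(G x)) hEGc
  have hK0 : ∀ p, 0 ≤ K p := fun p => integral_nonneg fun t => by positivity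
  have hKz : ∀ p, p ∉ Ω → K p = 0 := fun p hp => by simp [hK, hE00 p _ hp]
  have hdirbd : ∀ p (q : ℝ × ℝ) (j : Fin 3), dir3 j = (q, 0) → |fderiv ℝ U p q| ≤ 6 * K p := by
    intro p q j hj
    rw [hU, aux_fderivP E hEd, hK, ← integral_const_mul, ← hj]
    rw [← Real.norm_eq_abs]
    refine norm_integral_le_of_norm_le (aux_intOn1 _ (by fun_prop)) (ae_of_all _ fun t => ?_)
    rw [hfE, Real.norm_eq_abs]
    have hterm : ∀ i : Fin 3, |2 * u (p, t) i * fderiv ℝ u (p, t) (dir3 j) i| ≤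
        2 * (√(E (p, t)) * √(G (p, t))) := by
      intro i
      rw [abs_mul, abs_mul, abs_two, mul_assoc]
      have a1 : |u (p, t) i| ≤ √(E (p, t)) := by
        apply Real.abs_le_sqrt
        exact Finset.single_le_sum (f := fun i => u (p, t) i ^ 2) (fun _ _ => sq_nonneg _) (Finset.mem_univ i)
      have a2 : |fderiv ℝ u (p, t) (dir3 j) i| ≤ √(G (p, t)) := by
        apply Real.abs_le_sqrt
        refine le_trans ?_ (Finset.single_le_sum
          (f := fun i => ∑ j : Fin 3, (fderiv ℝ u (p, t) (dir3 j) i) ^ 2)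
          (fun _ _ => by positivity) (Finset.mem_univ i))
        exact Finset.single_le_sum (f := fun j => (fderiv ℝ u (p, t) (dir3 j) i) ^ 2)
          (fun _ _ => sq_nonneg _) (Finset.mem_univ j)
      gcongr
    calc _ ≤ ∑ i, |2 * u (p, t) i * fderiv ℝ u (p, t) (dir3 j) i| := Finset.abs_sum_le_sum_abs _ _
      _ ≤ ∑ i : Fin 3, 2 * (√(E (p, t)) * √(G (p, t))) := Finset.sum_le_sum fun i _ => hterm i
      _ = _ := by simp; ring
  have hnorm : ∀ p, ‖fderiv ℝ U p‖ ≤ 12 * K p := by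
    intro p
    refine ContinuousLinearMap.opNorm_le_bound _ (by have := hK0 p; positivity) fun q => ?_
    have e : q = q.1 • ((1:ℝ), (0:ℝ)) + q.2 • ((0:ℝ), (1:ℝ)) := by ext <;> simp
    have b1 := hdirbd p (1, 0) 0 rfl
    have b2 := hdirbd p (0, 1) 1 rfl
    have c1 : |q.1| ≤ ‖q‖ := norm_fst_le q
    have c2 : |q.2| ≤ ‖q‖ := norm_snd_le q
    have hk := hK0 p
    calc ‖fderiv ℝ U p q‖ = |q.1 * fderiv ℝ U p (1, 0) + q.2 * fderiv ℝ U p (0, 1)| := by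
          conv_lhs => rw [e, map_add, map_smul, map_smul]
          rfl
      _ ≤ |q.1| * |fderiv ℝ U p (1, 0)| + |q.2| * |fderiv ℝ U p (0, 1)| := by
          rw [← abs_mul, ← abs_mul]; exact abs_add_le _ _
      _ ≤ ‖q‖ * (6 * K p) + ‖q‖ * (6 * K p) := by gcongr
      _ = _ := by ring
  have hhold : Real.HolderConjugate (Module.finrank ℝ (ℝ × ℝ)) 2 := by
    have : Module.finrank ℝ (ℝ × ℝ) = 2 := by simp
    rw [this]
    exact_mod_cast Real.HolderConjugate.two_two
  have sob := lintegral_pow_le_pow_lintegral_fderiv (volume : Measure (ℝ × ℝ)) hUd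
    (aux_compact Ω hb U hUz) hhold
  rw [← hCs] at sob
  have hKint : Integrable K := hKc.integrable_of_hasCompactSupport (aux_compact Ω hb K hKz)
  have hr : ∫⁻ x, ‖fderiv ℝ U x‖ₑ ≤ ENNReal.ofReal (12 * ∫ p in Ω, K p) := by
    rw [setIntegral_eq_integral_of_forall_compl_eq_zero hKz, ← integral_const_mul,
      ofReal_integral_eq_lintegral_ofReal (hKint.const_mul 12)
        (ae_of_all _ fun p => by have := hK0 p; positivity)]
    refine lintegral_mono fun p => ?_
    rw [← ofReal_norm]
    exact ENNReal.ofReal_le_ofReal (hnorm p)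
  have hl : ENNReal.ofReal (∫ p in Ω, U p ^ 2) ≤ ∫⁻ x, ‖U x‖ₑ ^ (2:ℝ) := by
    rw [ofReal_integral_eq_lintegral_ofReal (aux_intOn2 Ω hb (fun p => U p ^ 2) (hUd.continuous.pow 2))
      (ae_of_all _ fun p => sq_nonneg _)]
    refine (lintegral_mono fun p => ?_).trans (setLIntegral_le_lintegral Ω _)
    rw [← ofReal_norm, ENNReal.ofReal_rpow_of_nonneg (norm_nonneg _) (by norm_num)]
    apply ENNReal.ofReal_le_ofReal
    rw [Real.rpow_two, Real.norm_eq_abs, sq_abs]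
  have hKn : 0 ≤ ∫ p in Ω, K p := integral_nonneg hK0
  have main : ∫ p in Ω, U p ^ 2 ≤ Cs * (12 * ∫ p in Ω, K p) ^ 2 := by
    have h1 : ENNReal.ofReal (∫ p in Ω, U p ^ 2) ≤ Cs * (ENNReal.ofReal (12 * ∫ p in Ω, K p)) ^ (2:ℝ) :=
      hl.trans (sob.trans (by gcongr))
    rw [ENNReal.ofReal_rpow_of_nonneg (by positivity) (by norm_num), ← ENNReal.ofReal_coe_nnreal,
      ← ENNReal.ofReal_mul (by positivity), ENNReal.ofReal_le_ofReal_iff (by positivity),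
      Real.rpow_two] at h1
    exact h1
  have hKEG : ∫ p in Ω, K p ≤ √(∫ x in Ω ×ˢ Ioo (-π) π, E x) * √(∫ x in Ω ×ˢ Ioo (-π) π, G x) := by
    rw [hK, ← aux_fubini Ω hb (fun x => √(E x) * √(G x)) hEGc]
    exact (aux_cs _ E G (aux_intOn Ω hb E hEc) (aux_intOn Ω hb G hGc) hE0 hG0).2
  have hEi : 0 ≤ ∫ x in Ω ×ˢ Ioo (-π) π, E x := integral_nonneg hE0
  have hGi : 0 ≤ ∫ x in Ω ×ˢ Ioo (-π) π, G x := integral_nonneg hG0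
  have hsq : (∫ p in Ω, K p) ^ 2 ≤ (∫ x in Ω ×ˢ Ioo (-π) π, E x) * ∫ x in Ω ×ˢ Ioo (-π) π, G x := by
    calc _ ≤ (√(∫ x in Ω ×ˢ Ioo (-π) π, E x) * √(∫ x in Ω ×ˢ Ioo (-π) π, G x)) ^ 2 := by gcongr
      _ = _ := by rw [mul_pow, Real.sq_sqrt hEi, Real.sq_sqrt hGi]
  have hCs0 : (0:ℝ) ≤ Cs := Cs.2
  calc _ ≤ _ := main
    _ = Cs * 144 * (∫ p in Ω, K p) ^ 2 := by ring
    _ ≤ Cs * 144 * ((∫ x in Ω ×ˢ Ioo (-π) π, E x) * ∫ x in Ω ×ˢ Ioo (-π) π, G x) := by gcongr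
    _ ≤ _ := by gcongr; linarith

/-- For `s > 1/2` there is `C = C(s) > 0` such that for every
bounded open `Ω ⊆ ℝ²`, setting `D = Ω × (-π, π)`, all smooth divergence-free
vector fields `u, v, w` that are `2π`-periodic with mean zero in `x₃` and vanish
on (outside of) the lateral boundary satisfy
`|∫_D (u·∇)v · w| ≤ C ‖u‖₂^{1/2} ‖∇u‖₂^{1/2} ‖v‖₂^{1/2} ‖∇v‖₂^{1/2}
‖∇w‖₂^{1-1/(2s)} ‖∂₃^s ∇w‖₂^{1/(2s)}`, where `∂₃^s ∇w` is characterized through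
the vertical Fourier coefficients. -/
theorem statement6 (s : ℝ) (hs : 1 / 2 < s) :
    ∃ C : ℝ, 0 < C ∧
      ∀ (Ω : Set (ℝ × ℝ)), IsOpen Ω → Bornology.IsBounded Ω →
      ∀ (u v w : (ℝ × ℝ) × ℝ → Fin 3 → ℝ) (Dsw : (ℝ × ℝ) × ℝ → Fin 3 → Fin 3 → ℝ),
        -- smoothness
        ContDiff ℝ (⊤ : ℕ∞) u → ContDiff ℝ (⊤ : ℕ∞) v → ContDiff ℝ (⊤ : ℕ∞) w → Continuous Dsw →
        -- divergence free
        (∀ x, ∑ j : Fin 3, fderiv ℝ u x (dir3 j) j = 0) →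
        (∀ x, ∑ j : Fin 3, fderiv ℝ v x (dir3 j) j = 0) →
        (∀ x, ∑ j : Fin 3, fderiv ℝ w x (dir3 j) j = 0) →
        -- 2π-periodicity in the vertical variable
        (∀ p t, u (p, t + 2 * π) = u (p, t)) →
        (∀ p t, v (p, t + 2 * π) = v (p, t)) →
        (∀ p t, w (p, t + 2 * π) = w (p, t)) →
        -- mean zero in the vertical variable
        (∀ (p : ℝ × ℝ) (i : Fin 3), ∫ t in Ioo (-π) π, u (p, t) i = 0) →
        (∀ (p : ℝ × ℝ) (i : Fin 3), ∫ t in Ioo (-π) π, v (p, t) i = 0) →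
        (∀ (p : ℝ × ℝ) (i : Fin 3), ∫ t in Ioo (-π) π, w (p, t) i = 0) →
        -- vanishing on the lateral boundary
        (∀ (p : ℝ × ℝ) t, p ∉ Ω → u (p, t) = 0) →
        (∀ (p : ℝ × ℝ) t, p ∉ Ω → v (p, t) = 0) →
        (∀ (p : ℝ × ℝ) t, p ∉ Ω → w (p, t) = 0) →
        -- `Dsw = ∂₃^s ∇w`: each vertical Fourier coefficient of `Dsw · i j`
        -- is `|k|^s` times the corresponding coefficient of `∂_j w_i`
        (∀ (p : ℝ × ℝ) (i j : Fin 3) (k : ℤ),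
          (∫ t in Ioo (-π) π, (Dsw (p, t) i j : ℂ) * Complex.exp (-Complex.I * (k : ℂ) * (t : ℂ)))
            = (|(k : ℝ)| ^ s : ℝ) *
              ∫ t in Ioo (-π) π,
                ((fderiv ℝ w (p, t) (dir3 j) i : ℝ) : ℂ) *
                  Complex.exp (-Complex.I * (k : ℂ) * (t : ℂ))) →
        |∫ x in Ω ×ˢ Ioo (-π) π,
            ∑ i : Fin 3, (∑ j : Fin 3, u x j * fderiv ℝ v x (dir3 j) i) * w x i| ≤
          C * (∫ x in Ω ×ˢ Ioo (-π) π, ∑ i : Fin 3, (u x i) ^ 2) ^ ((1 : ℝ) / 4) *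
            (∫ x in Ω ×ˢ Ioo (-π) π,
                ∑ i : Fin 3, ∑ j : Fin 3, (fderiv ℝ u x (dir3 j) i) ^ 2) ^ ((1 : ℝ) / 4) *
            (∫ x in Ω ×ˢ Ioo (-π) π, ∑ i : Fin 3, (v x i) ^ 2) ^ ((1 : ℝ) / 4) *
            (∫ x in Ω ×ˢ Ioo (-π) π,
                ∑ i : Fin 3, ∑ j : Fin 3, (fderiv ℝ v x (dir3 j) i) ^ 2) ^ ((1 : ℝ) / 4) *
            (∫ x in Ω ×ˢ Ioo (-π) π,
                ∑ i : Fin 3, ∑ j : Fin 3, (fderiv ℝ w x (dir3 j) i) ^ 2) ^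
              ((1 / 2 : ℝ) * (1 - 1 / (2 * s))) *
            (∫ x in Ω ×ˢ Ioo (-π) π,
                ∑ i : Fin 3, ∑ j : Fin 3, (Dsw x i j) ^ 2) ^ (1 / (4 * s)) := by
  obtain ⟨CL, hCL, lady⟩ := aux_lady
  have h2s : 0 < 2 * s - 1 := by linarith
  set KA : ℝ := 4 * (1 + 1 / (2 * s - 1)) with hKA
  have hKA0 : 0 < KA := by positivity
  refine ⟨9 * √KA * (CL ^ ((1:ℝ) / 4)) * (CL ^ ((1:ℝ) / 4)), by positivity, ?_⟩
  intro Ω hO hb u v w Dsw hu hv hw hDc hdu hdv hdw hpu hpv hpw hmu hmv hmw hu0 hv0 hw0 hDs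
  have hu1 : ContDiff ℝ 1 u := hu.of_le (by exact_mod_cast le_top)
  have hv1 : ContDiff ℝ 1 v := hv.of_le (by exact_mod_cast le_top)
  have hw1 : ContDiff ℝ 1 w := hw.of_le (by exact_mod_cast le_top)
  have huc := hu1.continuous
  have hvc := hv1.continuous
  have hwc := hw1.continuous
  have hud : Continuous (fderiv ℝ u) := hu1.continuous_fderiv (by simp)
  have hvd : Continuous (fderiv ℝ v) := hv1.continuous_fderiv (by simp)
  have hwd : Continuous (fderiv ℝ w) := hw1.continuous_fderiv (by simp)
  have hui : ∀ i, ContDiff ℝ 1 (fun x => u x i) := fun i => contDiff_pi.1 hu1 i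
  have hvi : ∀ i, ContDiff ℝ 1 (fun x => v x i) := fun i => contDiff_pi.1 hv1 i
  have hwi : ∀ i, ContDiff ℝ 1 (fun x => w x i) := fun i => contDiff_pi.1 hw1 i
  have hDi : ∀ i j, Continuous (fun x => Dsw x i j) := fun i j => by fun_prop
  -- integration by parts
  have hibp : (∫ x in Ω ×ˢ Ioo (-π) π,
      ∑ i : Fin 3, (∑ j : Fin 3, u x j * fderiv ℝ v x (dir3 j) i) * w x i) =
      - ∫ x in Ω ×ˢ Ioo (-π) π, ∑ i : Fin 3, ∑ j : Fin 3, u x j * v x i * fderiv ℝ w x (dir3 j) i := by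
    set h : Fin 3 → (ℝ × ℝ) × ℝ → ℝ := fun j x => u x j * ∑ i, v x i * w x i with hh
    have hhd : ∀ j, ContDiff ℝ 1 (h j) := fun j =>
      (hui j).mul (ContDiff.sum fun i _ => (hvi i).mul (hwi i))
    have hfh : ∀ j x d, fderiv ℝ (h j) x d =
        u x j * (∑ i, (v x i * fderiv ℝ w x d i + w x i * fderiv ℝ v x d i)) +
          (∑ i, v x i * w x i) * fderiv ℝ u x d j := by
      intro j x d
      have h1 : HasFDerivAt u (fderiv ℝ u x) x := (hu1.differentiable (by simp) x).hasFDerivAt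
      have h2 : HasFDerivAt v (fderiv ℝ v x) x := (hv1.differentiable (by simp) x).hasFDerivAt
      have h3 : HasFDerivAt w (fderiv ℝ w x) x := (hw1.differentiable (by simp) x).hasFDerivAt
      have h4 := fun i => (hasFDerivAt_pi'.1 h2 i).mul (hasFDerivAt_pi'.1 h3 i)
      have h5 := HasFDerivAt.fun_sum (u := Finset.univ) fun i _ => h4 i
      have h6 := (hasFDerivAt_pi'.1 h1 j).mul h5
      have h7 : fderiv ℝ (h j) x = _ := HasFDerivAt.fderiv h6
      rw [h7]
      simp
    have hz : ∀ j, ∫ x in Ω ×ˢ Ioo (-π) π, fderiv ℝ (h j) x (dir3 j) = 0 := by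
      intro j
      refine aux_ibp Ω hb (h j) (hhd j) ?_ ?_ ?_ j
      · intro p t hp; simp [hh, hu0 p t hp]
      · intro p t d hp; rw [hfh]; simp [hu0 p t hp, hv0 p t hp]
      · intro p t; simp [hh, hpu, hpv, hpw]
    have hhc : ∀ j, Continuous (fun x => fderiv ℝ (h j) x (dir3 j)) := fun j => by
      have := (hhd j).continuous_fderiv (by simp)
      fun_prop
    have hsum : ∫ x in Ω ×ˢ Ioo (-π) π, ∑ j, fderiv ℝ (h j) x (dir3 j) = 0 := by
      rw [integral_finsetSum _ fun j _ => aux_intOn Ω hb _ (hhc j)]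
      simp [hz]
    rw [eq_neg_iff_add_eq_zero, ← integral_add (aux_intOn Ω hb _ (by fun_prop))
      (aux_intOn Ω hb _ (by fun_prop)), ← hsum]
    congr 1
    ext x
    simp only [hfh]
    have hdx := hdu x
    simp only [Fin.sum_univ_three] at hdx ⊢
    linear_combination (-(v x 0 * w x 0 + v x 1 * w x 1 + v x 2 * w x 2)) * hdx
  -- notation
  set Eu : (ℝ × ℝ) × ℝ → ℝ := fun x => ∑ i : Fin 3, (u x i) ^ 2 with hEu
  set Ev : (ℝ × ℝ) × ℝ → ℝ := fun x => ∑ i : Fin 3, (v x i) ^ 2 with hEv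
  set Gw : (ℝ × ℝ) × ℝ → ℝ :=
    fun x => ∑ i : Fin 3, ∑ j : Fin 3, (fderiv ℝ w x (dir3 j) i) ^ 2 with hGw
  set Gs : (ℝ × ℝ) × ℝ → ℝ := fun x => ∑ i : Fin 3, ∑ j : Fin 3, (Dsw x i j) ^ 2 with hGs
  have hEuc : Continuous Eu := by fun_prop
  have hEvc : Continuous Ev := by fun_prop
  have hGwc : Continuous Gw := by fun_prop
  have hGsc : Continuous Gs := by fun_prop
  have hEu0 : ∀ x, 0 ≤ Eu x := fun x => by positivity
  have hEv0 : ∀ x, 0 ≤ Ev x := fun x => by positivity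
  have hGw0 : ∀ x, 0 ≤ Gw x := fun x => by positivity
  have hGs0 : ∀ x, 0 ≤ Gs x := fun x => by positivity
  set U : ℝ × ℝ → ℝ := fun p => ∫ t in Ioo (-π) π, Eu (p, t) with hU
  set V : ℝ × ℝ → ℝ := fun p => ∫ t in Ioo (-π) π, Ev (p, t) with hV
  set A : ℝ × ℝ → ℝ := fun p => ∫ t in Ioo (-π) π, Gw (p, t) with hA
  set B : ℝ × ℝ → ℝ := fun p => ∫ t in Ioo (-π) π, Gs (p, t) with hB
  have hUc : Continuous U := aux_contP Eu hEuc
  have hVc : Continuous V := aux_contP Ev hEvc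
  have hAc : Continuous A := aux_contP Gw hGwc
  have hBc : Continuous B := aux_contP Gs hGsc
  have hU0 : ∀ p, 0 ≤ U p := fun p => integral_nonneg fun t => hEu0 _
  have hV0 : ∀ p, 0 ≤ V p := fun p => integral_nonneg fun t => hEv0 _
  have hA0 : ∀ p, 0 ≤ A p := fun p => integral_nonneg fun t => hGw0 _
  have hB0 : ∀ p, 0 ≤ B p := fun p => integral_nonneg fun t => hGs0 _
  have hth : 0 ≤ 1 - 1 / (2 * s) := by
    rw [sub_nonneg, div_le_one (by linarith)]; linarith
  have hth2 : 0 ≤ 1 / (2 * s) := by positivity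
  -- vertical sup bound
  have hsup : ∀ p t i j, |fderiv ℝ w (p, t) (dir3 j) i| ≤
      √(KA * (A p ^ (1 - 1 / (2 * s)) * B p ^ (1 / (2 * s)))) := by
    intro p t i j
    apply Real.abs_le_sqrt
    have hper : ∀ t, fderiv ℝ w (p, t + 2 * π) (dir3 j) i = fderiv ℝ w (p, t) (dir3 j) i := by
      intro t
      have e : w = fun x => w (x + ((0, 0), 2 * π)) := by
        ext1 ⟨q, r⟩
        have : ((q, r) : (ℝ × ℝ) × ℝ) + ((0, 0), 2 * π) = (q, r + 2 * π) := by
          ext <;> simp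
        rw [this, hpw]
      conv_rhs => rw [e, fderiv_comp_add_right]
      have : ((p, t) : (ℝ × ℝ) × ℝ) + ((0, 0), 2 * π) = (p, t + 2 * π) := by
          ext <;> simp
      rw [this]
    have hfi : ∀ x d, fderiv ℝ (fun x => w x i) x d = fderiv ℝ w x d i := by
      intro x d
      have h3 : HasFDerivAt w (fderiv ℝ w x) x := (hw1.differentiable (by simp) x).hasFDerivAt
      rw [(hasFDerivAt_pi'.1 h3 i).fderiv]
      simp
    have hmn : ∫ t in Ioo (-π) π, fderiv ℝ w (p, t) (dir3 j) i = 0 := by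
      have := aux_mean (fun x => w x i) (hwi i) (fun p t => by rw [hpw]) (fun p => hmw p i) p j
      simpa only [hfi] using this
    refine (aux_agmon s hs (fun t => fderiv ℝ w (p, t) (dir3 j) i) (fun t => Dsw (p, t) i j)
      (by fun_prop) (by fun_prop) hper hmn (hDs p i j) t).trans ?_
    have m1 : ∫ t in Ioo (-π) π, (fderiv ℝ w (p, t) (dir3 j) i) ^ 2 ≤ A p := by
      refine integral_mono (aux_intOn1 _ (by fun_prop)) (aux_intOn1 _ (by fun_prop)) fun t => ?_
      refine le_trans ?_ (Finset.single_le_sum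
          (f := fun i => ∑ j : Fin 3, (fderiv ℝ w (p, t) (dir3 j) i) ^ 2)
          (fun _ _ => by positivity) (Finset.mem_univ i))
      exact Finset.single_le_sum (f := fun j => (fderiv ℝ w (p, t) (dir3 j) i) ^ 2)
          (fun _ _ => sq_nonneg _) (Finset.mem_univ j)
    have m2 : ∫ t in Ioo (-π) π, (Dsw (p, t) i j) ^ 2 ≤ B p := by
      refine integral_mono (aux_intOn1 _ (by fun_prop)) (aux_intOn1 _ (by fun_prop)) fun t => ?_
      refine le_trans ?_ (Finset.single_le_sum
          (f := fun i => ∑ j : Fin 3, (Dsw (p, t) i j) ^ 2)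
          (fun _ _ => by positivity) (Finset.mem_univ i))
      exact Finset.single_le_sum (f := fun j => (Dsw (p, t) i j) ^ 2)
          (fun _ _ => sq_nonneg _) (Finset.mem_univ j)
    have n1 : 0 ≤ ∫ t in Ioo (-π) π, (fderiv ℝ w (p, t) (dir3 j) i) ^ 2 :=
      integral_nonneg fun _ => sq_nonneg _
    have n2 : 0 ≤ ∫ t in Ioo (-π) π, (Dsw (p, t) i j) ^ 2 :=
      integral_nonneg fun _ => sq_nonneg _
    have := hA0 p
    gcongr
  -- bound on each vertical line
  have hline : ∀ p, |∫ t in Ioo (-π) π, ∑ i : Fin 3, ∑ j : Fin 3,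
        u (p, t) j * v (p, t) i * fderiv ℝ w (p, t) (dir3 j) i| ≤
      9 * √KA * ((U p ^ 2) ^ ((1:ℝ) / 4) * (V p ^ 2) ^ ((1:ℝ) / 4) *
        A p ^ ((1 / 2 : ℝ) * (1 - 1 / (2 * s))) * B p ^ (1 / (4 * s))) := by
    intro p
    set M := √(KA * (A p ^ (1 - 1 / (2 * s)) * B p ^ (1 / (2 * s)))) with hM
    have hMe : M = √KA * (A p ^ ((1 / 2 : ℝ) * (1 - 1 / (2 * s))) * B p ^ (1 / (4 * s))) := by
      have := hA0 p
      have := hB0 p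
      have e1 : √(A p ^ (1 - 1 / (2 * s))) = A p ^ ((1 / 2 : ℝ) * (1 - 1 / (2 * s))) := by
        rw [Real.sqrt_eq_rpow, ← Real.rpow_mul (hA0 p), mul_comm]
      have e3 : 1 / (4 * s) = 1 / (2 * s) * (1 / 2) := by
        rw [div_mul_div_comm]; congr 1 <;> ring
      have e2 : √(B p ^ (1 / (2 * s))) = B p ^ (1 / (4 * s)) := by
        rw [e3, Real.rpow_mul (hB0 p), ← Real.sqrt_eq_rpow]
      rw [hM, Real.sqrt_mul hKA0.le,
        Real.sqrt_mul (show 0 ≤ A p ^ (1 - 1 / (2 * s)) by positivity), e1, e2]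
    have hq : ∀ y : ℝ, 0 ≤ y → (y ^ 2) ^ ((1:ℝ) / 4) = √y := by
      intro y hy
      rw [← Real.rpow_natCast, ← Real.rpow_mul hy, Real.sqrt_eq_rpow]
      norm_num
    have hcs := aux_cs (volume.restrict (Ioo (-π) π)) (fun t => Eu (p, t)) (fun t => Ev (p, t))
      (aux_intOn1 _ (by fun_prop)) (aux_intOn1 _ (by fun_prop)) (fun t => hEu0 _) (fun t => hEv0 _)
    have h1 : |∫ t in Ioo (-π) π, ∑ i : Fin 3, ∑ j : Fin 3,
        u (p, t) j * v (p, t) i * fderiv ℝ w (p, t) (dir3 j) i| ≤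
        ∫ t in Ioo (-π) π, 9 * M * (√(Eu (p, t)) * √(Ev (p, t))) := by
      rw [← Real.norm_eq_abs]
      refine norm_integral_le_of_norm_le (hcs.1.const_mul _) (ae_of_all _ fun t => ?_)
      rw [Real.norm_eq_abs]
      have hterm : ∀ i j : Fin 3, |u (p, t) j * v (p, t) i * fderiv ℝ w (p, t) (dir3 j) i| ≤
          √(Eu (p, t)) * √(Ev (p, t)) * M := by
        intro i j
        rw [abs_mul, abs_mul]
        have a1 : |u (p, t) j| ≤ √(Eu (p, t)) := by
          apply Real.abs_le_sqrt
          exact Finset.single_le_sum (f := fun i => u (p, t) i ^ 2) (fun _ _ => sq_nonneg _)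
            (Finset.mem_univ j)
        have a2 : |v (p, t) i| ≤ √(Ev (p, t)) := by
          apply Real.abs_le_sqrt
          exact Finset.single_le_sum (f := fun i => v (p, t) i ^ 2) (fun _ _ => sq_nonneg _)
            (Finset.mem_univ i)
        have a3 := hsup p t i j
        gcongr
      calc _ ≤ ∑ i : Fin 3, |∑ j : Fin 3, u (p, t) j * v (p, t) i * fderiv ℝ w (p, t) (dir3 j) i| :=
            Finset.abs_sum_le_sum_abs _ _
        _ ≤ ∑ i : Fin 3, ∑ j : Fin 3, |u (p, t) j * v (p, t) i * fderiv ℝ w (p, t) (dir3 j) i| :=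
            Finset.sum_le_sum fun i _ => Finset.abs_sum_le_sum_abs _ _
        _ ≤ ∑ i : Fin 3, ∑ j : Fin 3, √(Eu (p, t)) * √(Ev (p, t)) * M :=
            Finset.sum_le_sum fun i _ => Finset.sum_le_sum fun j _ => hterm i j
        _ = _ := by simp; ring
    rw [integral_const_mul] at h1
    refine h1.trans ?_
    calc _ ≤ 9 * M * (√(U p) * √(V p)) := by gcongr; exact hcs.2
      _ = _ := by rw [hMe, hq _ (hU0 p), hq _ (hV0 p)]; ring
  have hhol := aux_holder (volume.restrict Ω)
    ![fun p => U p ^ 2, fun p => V p ^ 2, A, B]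
    (by
      intro i
      fin_cases i
      · exact aux_intOn2 Ω hb (fun p => U p ^ 2) (by fun_prop)
      · exact aux_intOn2 Ω hb (fun p => V p ^ 2) (by fun_prop)
      · exact aux_intOn2 Ω hb A hAc
      · exact aux_intOn2 Ω hb B hBc)
    (by
      intro i x
      fin_cases i
      · exact sq_nonneg _
      · exact sq_nonneg _
      · exact hA0 x
      · exact hB0 x)
    ![(1:ℝ) / 4, (1:ℝ) / 4, (1 / 2 : ℝ) * (1 - 1 / (2 * s)), 1 / (4 * s)]
    (by
      intro i
      fin_cases i
      · change (0:ℝ) ≤ 1 / 4; norm_num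
      · change (0:ℝ) ≤ 1 / 4; norm_num
      · change (0:ℝ) ≤ (1 / 2 : ℝ) * (1 - 1 / (2 * s)); positivity
      · change (0:ℝ) ≤ 1 / (4 * s); positivity)
    (by
      rw [Fin.sum_univ_four]
      change (1:ℝ) / 4 + 1 / 4 + (1 / 2 : ℝ) * (1 - 1 / (2 * s)) + 1 / (4 * s) = 1
      field_simp
      ring)
  simp only [Fin.prod_univ_four] at hhol
  obtain ⟨hHi, hHb⟩ := hhol
  change Integrable (fun p => (U p ^ 2) ^ ((1:ℝ) / 4) * (V p ^ 2) ^ ((1:ℝ) / 4) *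
        A p ^ ((1 / 2 : ℝ) * (1 - 1 / (2 * s))) * B p ^ (1 / (4 * s))) (volume.restrict Ω) at hHi
  change (∫ p in Ω, (U p ^ 2) ^ ((1:ℝ) / 4) * (V p ^ 2) ^ ((1:ℝ) / 4) *
        A p ^ ((1 / 2 : ℝ) * (1 - 1 / (2 * s))) * B p ^ (1 / (4 * s))) ≤
        (∫ p in Ω, U p ^ 2) ^ ((1:ℝ) / 4) * (∫ p in Ω, V p ^ 2) ^ ((1:ℝ) / 4) *
        (∫ p in Ω, A p) ^ ((1 / 2 : ℝ) * (1 - 1 / (2 * s))) * (∫ p in Ω, B p) ^ (1 / (4 * s)) at hHb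
  have hlu := lady Ω hO hb u hu1 hu0
  have hlv := lady Ω hO hb v hv1 hv0
  rw [hibp, abs_neg, aux_fubini Ω hb _ (by fun_prop)]
  rw [aux_fubini Ω hb Gw hGwc, aux_fubini Ω hb Gs hGsc]
  have hstep : |∫ p in Ω, ∫ t in Ioo (-π) π, ∑ i : Fin 3, ∑ j : Fin 3,
        u (p, t) j * v (p, t) i * fderiv ℝ w (p, t) (dir3 j) i| ≤
      9 * √KA * ((∫ p in Ω, U p ^ 2) ^ ((1:ℝ) / 4) * (∫ p in Ω, V p ^ 2) ^ ((1:ℝ) / 4) *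
        (∫ p in Ω, A p) ^ ((1 / 2 : ℝ) * (1 - 1 / (2 * s))) * (∫ p in Ω, B p) ^ (1 / (4 * s))) := by
    rw [← Real.norm_eq_abs]
    refine (norm_integral_le_of_norm_le (hHi.const_mul (9 * √KA))
      (ae_of_all _ fun p => hline p)).trans ?_
    rw [integral_const_mul]
    gcongr
  refine hstep.trans ?_
  set IU := ∫ x in Ω ×ˢ Ioo (-π) π, Eu x with hIU
  set IV := ∫ x in Ω ×ˢ Ioo (-π) π, Ev x with hIV
  set GU := ∫ x in Ω ×ˢ Ioo (-π) π, ∑ i : Fin 3, ∑ j : Fin 3, (fderiv ℝ u x (dir3 j) i) ^ 2 with hGU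
  set GV := ∫ x in Ω ×ˢ Ioo (-π) π, ∑ i : Fin 3, ∑ j : Fin 3, (fderiv ℝ v x (dir3 j) i) ^ 2 with hGV
  have hIU0 : 0 ≤ IU := integral_nonneg hEu0
  have hIV0 : 0 ≤ IV := integral_nonneg hEv0
  have hGU0 : 0 ≤ GU := integral_nonneg fun x => by positivity
  have hGV0 : 0 ≤ GV := integral_nonneg fun x => by positivity
  have hIA : 0 ≤ ∫ p in Ω, A p := integral_nonneg hA0
  have hIB : 0 ≤ ∫ p in Ω, B p := integral_nonneg hB0
  have k1 : (∫ p in Ω, U p ^ 2) ^ ((1:ℝ) / 4) ≤ CL ^ ((1:ℝ) / 4) * (IU ^ ((1:ℝ) / 4) * GU ^ ((1:ℝ) / 4)) := by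
    rw [← Real.mul_rpow hIU0 hGU0, ← Real.mul_rpow hCL.le (by positivity)]
    exact Real.rpow_le_rpow (integral_nonneg fun p => sq_nonneg _) hlu (by norm_num)
  have k2 : (∫ p in Ω, V p ^ 2) ^ ((1:ℝ) / 4) ≤ CL ^ ((1:ℝ) / 4) * (IV ^ ((1:ℝ) / 4) * GV ^ ((1:ℝ) / 4)) := by
    rw [← Real.mul_rpow hIV0 hGV0, ← Real.mul_rpow hCL.le (by positivity)]
    exact Real.rpow_le_rpow (integral_nonneg fun p => sq_nonneg _) hlv (by norm_num)
  have k3 : 0 ≤ (∫ p in Ω, V p ^ 2) ^ ((1:ℝ) / 4) :=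
    Real.rpow_nonneg (integral_nonneg fun p => sq_nonneg _) _
  calc _ ≤ 9 * √KA * ((CL ^ ((1:ℝ) / 4) * (IU ^ ((1:ℝ) / 4) * GU ^ ((1:ℝ) / 4))) *
        (CL ^ ((1:ℝ) / 4) * (IV ^ ((1:ℝ) / 4) * GV ^ ((1:ℝ) / 4))) *
        (∫ p in Ω, A p) ^ ((1 / 2 : ℝ) * (1 - 1 / (2 * s))) * (∫ p in Ω, B p) ^ (1 / (4 * s))) := by
        gcongr
    _ = _ := by ring
end
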